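/- Let (H, α) be a monoidal Hom-bialgebra and (A, β) simultaneously a monoidal Hom-algebra and a monoidal Hom-coalgebra. Suppose (H, α) weakly acts on (A, β) (i.e. h·(ab) = (h₁·a)(h₂·b) and h·1_A = ε(h)1_A), (A, β) is a left (H, α)-Hom-comodule coalgebra with coaction ρ(a) = a₍₋₁₎ ⊗ a₍₀₎, the (m,k)-Hom-crossed product (A ♯_σ H, β ⊗ α) is a monoidal Hom-algebra with σ a twisted comodule cocycle, and (A ⋊ H, β ⊗ α) is the m-Hom-smash coproduct monoidal Hom-coalgebra. Then A ⊗ H equipped with the crossed-product multiplication, unit 1_A ⊗ 1_H, the smash-coproduct comultiplication and counit, and structure map β ⊗ α, is a monoidal Hom-bialgebra if and only if all of the following hold for all a, b ∈ A and h, g ∈ H: (A1) ε_A(ab) = ε_A(a)ε_A(b) and ε_A(1_A) = 1; (A2) ε_A(h·a) = ε_H(h)ε_A(a); (A3) Δ_A(σ(h, g)) = σ(h₁, g₁) ⊗ σ(h₂, g₂) and ε_A(σ(h, g)) = ε(h)ε(g); (A4) Δ_A(1_A) = 1_A ⊗ 1_A; (A5) (ab)₍₋₁₎ ⊗ (ab)₍₀₎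 = a₍₋₁₎b₍₋₁₎ ⊗ a₍₀₎b₍₀₎ and ρ(1_A) = 1_H ⊗ 1_A; (A6) α^{m−1}(σ(α^{k+2}(h₁), α^{k+2}(g₁))₍₋₁₎) α⁻¹(h₂g₂) ⊗ σ(α^{k+2}(h₁), α^{k+2}(g₁))₍₀₎ = h₁g₁ ⊗ σ(α^{k+1}(h₂), α^{k+1}(g₂)); (A7) Δ_A(ab) = a₁[(α^{2m}(a₂₍₋₁₎₁)·β⁻²(b₁)) σ(α^{k+m+1}(a₂₍₋₁₎₂), α^{k+m}(b₂₍₋₁₎))] ⊗ β(a₂₍₀₎ b₂₍₀₎); (A8) Δ_A(α^m(h)·b) = (α^m(h₁₁)·β⁻¹(b₁)) σ(α^{k+1}(h₁₂), α^{k+m+1}(b₂₍₋₁₎)) ⊗ α^m(h₂)·β(b₂₍₀₎); (A9) α^{m−1}((α^{m+1}(h₁)·b)₍₋₁₎) h₂ ⊗ (α^{m+1}(h₁)·b)₍₀₎ = h₁α^m(b₍₋₁₎) ⊗ α^m(h₂)·b₍₀₎. -/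

import Mathlib

open TensorProduct

noncomputable section

/-- A monoidal Hom-algebra `(A, β)`. -/
structure HomAlgebraStr (K : Type*) (A : Type*) [Field K] [AddCommGroup A] [Module K A] where
  mul : A →ₗ[K] A →ₗ[K] A
  one : A
  str : A ≃ₗ[K] A
  hom_assoc : ∀ a b c : A, mul (str a) (mul b c) = mul (mul a b) (str c)
  str_mul : ∀ a b : A, str (mul a b) = mul (str a) (str b)
  mul_one : ∀ a : A, mul a one = str a
  one_mul : ∀ a : A, mul one a = str a
  str_one : str one = one

/-- A monoidal Hom-coalgebra `(C, γ)`. -/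
structure HomCoalgebraStr (K : Type*) (C : Type*) [Field K] [AddCommGroup C] [Module K C] where
  comul : C →ₗ[K] C ⊗[K] C
  counit : C →ₗ[K] K
  str : C ≃ₗ[K] C
  hom_coassoc : ∀ c : C,
    TensorProduct.map str.symm.toLinearMap comul (comul c)
      = TensorProduct.assoc K C C C (TensorProduct.map comul str.symm.toLinearMap (comul c))
  comul_str : ∀ c : C, comul (str c) = TensorProduct.map str.toLinearMap str.toLinearMap (comul c)
  counit_comul_left : ∀ c : C,
    TensorProduct.lid K C (TensorProduct.map counit (LinearMap.id : C →ₗ[K] C) (comul c)) = str.symm c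
  counit_comul_right : ∀ c : C,
    TensorProduct.rid K C (TensorProduct.map (LinearMap.id : C →ₗ[K] C) counit (comul c)) = str.symm c
  counit_str : ∀ c : C, counit (str c) = counit c

/-- The componentwise multiplication on `N ⊗ N` induced by a bilinear multiplication on `N`. -/
def tensorSquareMul {K N : Type*} [Field K] [AddCommGroup N] [Module K N]
    (mul : N →ₗ[K] N →ₗ[K] N) :
    (N ⊗[K] N) →ₗ[K] (N ⊗[K] N) →ₗ[K] (N ⊗[K] N) :=
  TensorProduct.curry
    ((TensorProduct.map (TensorProduct.lift mul) (TensorProduct.lift mul)) ∘ₗ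
      (TensorProduct.tensorTensorTensorComm K N N N N).toLinearMap)

/-- A monoidal Hom-bialgebra `(H, α)`. -/
structure HomBialgebraStr (K : Type*) (H : Type*) [Field K] [AddCommGroup H] [Module K H]
    extends HomAlgebraStr K H where
  comul : H →ₗ[K] H ⊗[K] H
  counit : H →ₗ[K] K
  hom_coassoc : ∀ c : H,
    TensorProduct.map str.symm.toLinearMap comul (comul c)
      = TensorProduct.assoc K H H H (TensorProduct.map comul str.symm.toLinearMap (comul c))
  comul_str : ∀ c : H, comul (str c) = TensorProduct.map str.toLinearMap str.toLinearMap (comul c)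
  counit_comul_left : ∀ c : H,
    TensorProduct.lid K H (TensorProduct.map counit (LinearMap.id : H →ₗ[K] H) (comul c)) = str.symm c
  counit_comul_right : ∀ c : H,
    TensorProduct.rid K H (TensorProduct.map (LinearMap.id : H →ₗ[K] H) counit (comul c)) = str.symm c
  counit_str : ∀ c : H, counit (str c) = counit c
  comul_mul : ∀ a b : H, comul (mul a b) = tensorSquareMul mul (comul a) (comul b)
  comul_one : comul one = one ⊗ₜ[K] one
  counit_mul : ∀ a b : H, counit (mul a b) = counit a * counit b
  counit_one : counit one = 1

/-- A monoidal Hom-Hopf algebra `(H, α, S)`. -/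
structure HomHopfStr (K : Type*) (H : Type*) [Field K] [AddCommGroup H] [Module K H]
    extends HomBialgebraStr K H where
  antipode : H →ₗ[K] H
  antipode_str : ∀ h : H, antipode (str h) = str (antipode h)
  antipode_mul_left : ∀ h : H,
    TensorProduct.lift (mul ∘ₗ antipode) (comul h) = counit h • one
  antipode_mul_right : ∀ h : H,
    TensorProduct.lift (mul.compl₂ antipode) (comul h) = counit h • one

section Defs

variable {K H A C M : Type*} [Field K]
variable [AddCommGroup H] [Module K H] [AddCommGroup A] [Module K A]
variable [AddCommGroup C] [Module K C] [AddCommGroup M] [Module K M]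

/-- `(A, β)` is a left weak `(H, α)`-Hom-module algebra via `act`:
`h·(ab) = (h₁·a)(h₂·b)` and `h·1 = ε(h)1`. -/
structure IsWeakModuleAlgebra (HB : HomBialgebraStr K H) (AA : HomAlgebraStr K A)
    (act : H →ₗ[K] A →ₗ[K] A) : Prop where
  act_mul : ∀ (h : H) (a b : A),
    act h (AA.mul a b)
      = TensorProduct.lift AA.mul
          (TensorProduct.map (TensorProduct.lift act) (TensorProduct.lift act)
            (TensorProduct.map ((TensorProduct.mk K H A).flip a) ((TensorProduct.mk K H A).flip b)
              (HB.comul h)))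
  act_one : ∀ h : H, act h AA.one = HB.counit h • AA.one

/-- `(C, β)` is a left `(H, α)`-Hom-comodule coalgebra via `coact a = a₍₋₁₎ ⊗ a₍₀₎`. -/
structure IsComoduleCoalgebra (HB : HomBialgebraStr K H) (CC : HomCoalgebraStr K C)
    (coact : C →ₗ[K] H ⊗[K] C) : Prop where
  comodule_coassoc : ∀ c : C,
    TensorProduct.assoc K H H C
        (TensorProduct.map HB.comul CC.str.symm.toLinearMap (coact c))
      = TensorProduct.map HB.str.symm.toLinearMap coact (coact c)
  coact_str : ∀ c : C,
    coact (CC.str c) = TensorProduct.map HB.str.toLinearMap CC.str.toLinearMap (coact c)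
  counit_coact : ∀ c : C,
    TensorProduct.lid K C (TensorProduct.map HB.counit (LinearMap.id : C →ₗ[K] C) (coact c))
      = CC.str.symm c
  coact_comul : ∀ c : C,
    TensorProduct.map (LinearMap.id : H →ₗ[K] H) CC.comul (coact c)
      = TensorProduct.map (TensorProduct.lift HB.mul) (LinearMap.id : C ⊗[K] C →ₗ[K] C ⊗[K] C)
          (TensorProduct.tensorTensorTensorComm K H C H C
            (TensorProduct.map coact coact (CC.comul c)))
  counit_coact_one : ∀ c : C,
    TensorProduct.rid K H (TensorProduct.map (LinearMap.id : H →ₗ[K] H) CC.counit (coact c))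
      = CC.counit c • HB.one

/-- The `(m,k)`-Hom-crossed product multiplication on simple tensors:
`(a ♯ h)(b ♯ g) = a[(α^m(h₁₁)·β⁻²(b)) σ(α^{k+1}(h₁₂), α^k(g₁))] ♯ α(h₂g₂)`. -/
def cpMulElem (HB : HomBialgebraStr K H) (AA : HomAlgebraStr K A)
    (act : H →ₗ[K] A →ₗ[K] A) (σ : H →ₗ[K] H →ₗ[K] A) (m k : ℤ)
    (a : A) (h : H) (b : A) (g : H) : A ⊗[K] H :=
  TensorProduct.map
    ((AA.mul a) ∘ₗ TensorProduct.lift AA.mul ∘ₗ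
      TensorProduct.map
        ((act.flip ((AA.str ^ (-2 : ℤ)) b)) ∘ₗ (HB.str ^ m).toLinearMap)
        (TensorProduct.lift σ ∘ₗ
          TensorProduct.map (HB.str ^ (k+1)).toLinearMap (HB.str ^ k).toLinearMap) ∘ₗ
      (TensorProduct.assoc K H H H).toLinearMap)
    (HB.str.toLinearMap ∘ₗ TensorProduct.lift HB.mul)
    (TensorProduct.map (TensorProduct.map HB.comul (LinearMap.id : H →ₗ[K] H))
      (LinearMap.id : H ⊗[K] H →ₗ[K] H ⊗[K] H)
      (TensorProduct.tensorTensorTensorComm K H H H H (HB.comul h ⊗ₜ[K] HB.comul g)))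

/-- The `m`-Hom-smash product multiplication on simple tensors:
`(a ♯ h)(b ♯ g) = a(α^m(h₁)·β⁻¹(b)) ♯ α(h₂)g`. -/
def smashMulElem (HB : HomBialgebraStr K H) (AA : HomAlgebraStr K A)
    (act : H →ₗ[K] A →ₗ[K] A) (m : ℤ) (a : A) (h : H) (b : A) (g : H) : A ⊗[K] H :=
  TensorProduct.map
    ((AA.mul a) ∘ₗ (act.flip ((AA.str ^ (-1 : ℤ)) b)) ∘ₗ (HB.str ^ m).toLinearMap)
    ((HB.mul.flip g) ∘ₗ HB.str.toLinearMap)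
    (HB.comul h)

/-- The `m`-Hom-smash coproduct comultiplication on simple tensors:
`Δ(a ⋊ h) = (a₁ ⋊ α^m(a₂₍₋₁₎)α⁻¹(h₁)) ⊗ (β(a₂₍₀₎) ⋊ h₂)`. -/
def scComulElem (HB : HomBialgebraStr K H) (AC : HomCoalgebraStr K A)
    (coact : A →ₗ[K] H ⊗[K] A) (m : ℤ) (a : A) (h : H) :
    (A ⊗[K] H) ⊗[K] (A ⊗[K] H) :=
  TensorProduct.map
    (TensorProduct.map (LinearMap.id : A →ₗ[K] A)
        (TensorProduct.lift HB.mul ∘ₗ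
          TensorProduct.map (HB.str ^ m).toLinearMap (HB.str ^ (-1 : ℤ)).toLinearMap) ∘ₗ
      (TensorProduct.assoc K A H H).toLinearMap)
    (TensorProduct.map AC.str.toLinearMap (LinearMap.id : H →ₗ[K] H))
    (TensorProduct.tensorTensorTensorComm K (A ⊗[K] H) A H H
      ((TensorProduct.assoc K A H A).symm
          (TensorProduct.map (LinearMap.id : A →ₗ[K] A) coact (AC.comul a)) ⊗ₜ[K] HB.comul h))

/-- Condition (1) of Theorem 2.3. -/
def CPCond1 (HB : HomBialgebraStr K H) (AA : HomAlgebraStr K A)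
    (σ : H →ₗ[K] H →ₗ[K] A) : Prop :=
  (∀ h : H, σ h HB.one = HB.counit h • AA.one) ∧
  (∀ h : H, σ HB.one h = HB.counit h • AA.one) ∧
  (∀ h g : H, σ (HB.str h) (HB.str g) = AA.str (σ h g))

/-- Condition (2) of Theorem 2.3:
`[α^m(h₁l₁)·a] σ(α^{k+2}(h₂), α^{k+2}(l₂)) = σ(α^{k+2}(h₁), α^{k+2}(l₁)) [α^m(h₂l₂)·a]`. -/
def CPCond2 (HB : HomBialgebraStr K H) (AA : HomAlgebraStr K A)
    (act : H →ₗ[K] A →ₗ[K] A) (σ : H →ₗ[K] H →ₗ[K] A) (m k : ℤ) : Prop :=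
  ∀ (h l : H) (a : A),
    TensorProduct.lift AA.mul
      (TensorProduct.map
        ((act.flip a) ∘ₗ (HB.str ^ m).toLinearMap ∘ₗ TensorProduct.lift HB.mul)
        (TensorProduct.lift σ ∘ₗ
          TensorProduct.map (HB.str ^ (k+2)).toLinearMap (HB.str ^ (k+2)).toLinearMap)
        (TensorProduct.tensorTensorTensorComm K H H H H (HB.comul h ⊗ₜ[K] HB.comul l)))
    =
    TensorProduct.lift AA.mul
      (TensorProduct.map
        (TensorProduct.lift σ ∘ₗ
          TensorProduct.map (HB.str ^ (k+2)).toLinearMap (HB.str ^ (k+2)).toLinearMap)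
        ((act.flip a) ∘ₗ (HB.str ^ m).toLinearMap ∘ₗ TensorProduct.lift HB.mul)
        (TensorProduct.tensorTensorTensorComm K H H H H (HB.comul h ⊗ₜ[K] HB.comul l)))

/-- Condition (3) of Theorem 2.3:
`[α^{m+1}(h₁)·σ(α^{k+1}(l₁), α^{k+1}(g₁))] σ(α^{k+2}(h₂), α^{k+1}(l₂g₂))
  = σ(α^{k+2}(h₁), α^{k+2}(l₁)) σ(α^{k+1}(h₂l₂), α^{k+1}(g))`. -/
def CPCond3 (HB : HomBialgebraStr K H) (AA : HomAlgebraStr K A)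
    (act : H →ₗ[K] A →ₗ[K] A) (σ : H →ₗ[K] H →ₗ[K] A) (m k : ℤ) : Prop :=
  ∀ h l g : H,
    TensorProduct.lift AA.mul
      (TensorProduct.map
        (TensorProduct.lift act ∘ₗ
          TensorProduct.map (HB.str ^ (m+1)).toLinearMap
            (TensorProduct.lift σ ∘ₗ
              TensorProduct.map (HB.str ^ (k+1)).toLinearMap (HB.str ^ (k+1)).toLinearMap))
        (TensorProduct.lift σ ∘ₗ
          TensorProduct.map (HB.str ^ (k+2)).toLinearMap
            ((HB.str ^ (k+1)).toLinearMap ∘ₗ TensorProduct.lift HB.mul))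
        (TensorProduct.tensorTensorTensorComm K H H (H ⊗[K] H) (H ⊗[K] H)
          (HB.comul h ⊗ₜ[K]
            (TensorProduct.tensorTensorTensorComm K H H H H (HB.comul l ⊗ₜ[K] HB.comul g)))))
    =
    TensorProduct.lift AA.mul
      (TensorProduct.map
        (TensorProduct.lift σ ∘ₗ
          TensorProduct.map (HB.str ^ (k+2)).toLinearMap (HB.str ^ (k+2)).toLinearMap)
        ((σ.flip ((HB.str ^ (k+1)) g)) ∘ₗ (HB.str ^ (k+1)).toLinearMap ∘ₗ TensorProduct.lift HB.mul)
        (TensorProduct.tensorTensorTensorComm K H H H H (HB.comul h ⊗ₜ[K] HB.comul l)))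

/-- `σ` is a twisted comodule cocycle:
`β(a₁) ⊗ α^{m+1}(a₂₍₋₁₎)g ⊗ a₂₍₀₎
  = a₁σ(α^{k+m+2}(a₂₍₋₁₎₁), α^{k+1}(g₁)) ⊗ α^{m+2}(a₂₍₋₁₎₂)α(g₂) ⊗ a₂₍₀₎`. -/
def IsTwistedCocycle (HB : HomBialgebraStr K H) (AA : HomAlgebraStr K A)
    (AC : HomCoalgebraStr K A) (coact : A →ₗ[K] H ⊗[K] A)
    (σ : H →ₗ[K] H →ₗ[K] A) (m k : ℤ) : Prop :=
  ∀ (a : A) (g : H),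
    (TensorProduct.assoc K A H A).symm
      (TensorProduct.map AA.str.toLinearMap
        (TensorProduct.map ((HB.mul.flip g) ∘ₗ (HB.str ^ (m+1)).toLinearMap)
          (LinearMap.id : A →ₗ[K] A))
        (TensorProduct.map (LinearMap.id : A →ₗ[K] A) coact (AC.comul a)))
    =
    TensorProduct.map
      (TensorProduct.map (TensorProduct.lift AA.mul) (LinearMap.id : H →ₗ[K] H)
        ∘ₗ (TensorProduct.assoc K A A H).symm.toLinearMap
        ∘ₗ TensorProduct.map (LinearMap.id : A →ₗ[K] A)
            (TensorProduct.map
              (TensorProduct.lift σ ∘ₗ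
                TensorProduct.map (HB.str ^ (k+m+2)).toLinearMap (HB.str ^ (k+1)).toLinearMap)
              (TensorProduct.lift HB.mul ∘ₗ
                TensorProduct.map (HB.str ^ (m+2)).toLinearMap HB.str.toLinearMap)
            ∘ₗ (TensorProduct.tensorTensorTensorComm K H H H H).toLinearMap)
        ∘ₗ (TensorProduct.assoc K A (H ⊗[K] H) (H ⊗[K] H)).toLinearMap)
      (LinearMap.id : A →ₗ[K] A)
      ((TensorProduct.assoc K (A ⊗[K] (H ⊗[K] H)) (H ⊗[K] H) A).symm
        (TensorProduct.map (LinearMap.id : A ⊗[K] (H ⊗[K] H) →ₗ[K] A ⊗[K] (H ⊗[K] H))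
          (TensorProduct.comm K A (H ⊗[K] H)).toLinearMap
          (TensorProduct.assoc K (A ⊗[K] (H ⊗[K] H)) A (H ⊗[K] H)
            ((TensorProduct.assoc K A (H ⊗[K] H) A).symm
                (TensorProduct.map (LinearMap.id : A →ₗ[K] A)
                  (TensorProduct.map HB.comul (LinearMap.id : A →ₗ[K] A))
                  (TensorProduct.map (LinearMap.id : A →ₗ[K] A) coact (AC.comul a)))
              ⊗ₜ[K] HB.comul g))))

/-- Auxiliary map `(n ⊗ w) ⊗ t ↦ (α^j(n)·t) ⊗ f(w)` on `(H ⊗ M) ⊗ H`. -/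
def coactMulAux (HB : HomBialgebraStr K H) (j : ℤ) (f : M →ₗ[K] M) :
    (H ⊗[K] M) ⊗[K] H →ₗ[K] H ⊗[K] M :=
  TensorProduct.map
      (TensorProduct.lift HB.mul ∘ₗ
        TensorProduct.map (HB.str ^ j).toLinearMap (LinearMap.id : H →ₗ[K] H)) f
    ∘ₗ (TensorProduct.assoc K H H M).symm.toLinearMap
    ∘ₗ TensorProduct.map (LinearMap.id : H →ₗ[K] H) (TensorProduct.comm K M H).toLinearMap
    ∘ₗ (TensorProduct.assoc K H M H).toLinearMap

/-- (A1): `ε_A` is an algebra map. -/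
def CondA1 (AA : HomAlgebraStr K A) (AC : HomCoalgebraStr K A) : Prop :=
  (∀ a b : A, AC.counit (AA.mul a b) = AC.counit a * AC.counit b) ∧ AC.counit AA.one = 1

/-- (A2): `ε_A(h·a) = ε_H(h)ε_A(a)`. -/
def CondA2 (HB : HomBialgebraStr K H) (AC : HomCoalgebraStr K A)
    (act : H →ₗ[K] A →ₗ[K] A) : Prop :=
  ∀ (h : H) (a : A), AC.counit (act h a) = HB.counit h * AC.counit a

/-- (A3): `σ` is a coalgebra map. -/
def CondA3 (HB : HomBialgebraStr K H) (AC : HomCoalgebraStr K A)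
    (σ : H →ₗ[K] H →ₗ[K] A) : Prop :=
  (∀ h g : H,
    AC.comul (σ h g)
      = TensorProduct.map (TensorProduct.lift σ) (TensorProduct.lift σ)
          (TensorProduct.tensorTensorTensorComm K H H H H (HB.comul h ⊗ₜ[K] HB.comul g))) ∧
  (∀ h g : H, AC.counit (σ h g) = HB.counit h * HB.counit g)

/-- (A4): `Δ_A(1_A) = 1_A ⊗ 1_A`. -/
def CondA4 (AA : HomAlgebraStr K A) (AC : HomCoalgebraStr K A) : Prop :=
  AC.comul AA.one = AA.one ⊗ₜ[K] AA.one

/-- (A5): the coaction is an algebra map. -/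
def CondA5 (HB : HomBialgebraStr K H) (AA : HomAlgebraStr K A)
    (coact : A →ₗ[K] H ⊗[K] A) : Prop :=
  (∀ a b : A,
    coact (AA.mul a b)
      = TensorProduct.map (TensorProduct.lift HB.mul) (TensorProduct.lift AA.mul)
          (TensorProduct.tensorTensorTensorComm K H A H A (coact a ⊗ₜ[K] coact b))) ∧
  coact AA.one = HB.one ⊗ₜ[K] AA.one

/-- (A6). -/
def CondA6 (HB : HomBialgebraStr K H) (coact : A →ₗ[K] H ⊗[K] A)
    (σ : H →ₗ[K] H →ₗ[K] A) (m k : ℤ) : Prop :=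
  ∀ h g : H,
    coactMulAux HB (m-1) (LinearMap.id : A →ₗ[K] A)
      (TensorProduct.map
        (coact ∘ₗ TensorProduct.lift σ ∘ₗ
          TensorProduct.map (HB.str ^ (k+2)).toLinearMap (HB.str ^ (k+2)).toLinearMap)
        ((HB.str ^ (-1 : ℤ)).toLinearMap ∘ₗ TensorProduct.lift HB.mul)
        (TensorProduct.tensorTensorTensorComm K H H H H (HB.comul h ⊗ₜ[K] HB.comul g)))
    =
    TensorProduct.map (TensorProduct.lift HB.mul)
      (TensorProduct.lift σ ∘ₗ
        TensorProduct.map (HB.str ^ (k+1)).toLinearMap (HB.str ^ (k+1)).toLinearMap)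
      (TensorProduct.tensorTensorTensorComm K H H H H (HB.comul h ⊗ₜ[K] HB.comul g))

/-- (A7). -/
def CondA7 (HB : HomBialgebraStr K H) (AA : HomAlgebraStr K A) (AC : HomCoalgebraStr K A)
    (act : H →ₗ[K] A →ₗ[K] A) (coact : A →ₗ[K] H ⊗[K] A)
    (σ : H →ₗ[K] H →ₗ[K] A) (m k : ℤ) : Prop :=
  ∀ a b : A,
    AC.comul (AA.mul a b) =
      TensorProduct.map
        (TensorProduct.lift AA.mul
          ∘ₗ TensorProduct.map (LinearMap.id : A →ₗ[K] A)
              (TensorProduct.lift AA.mul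
                ∘ₗ TensorProduct.map
                    (TensorProduct.lift act ∘ₗ
                      TensorProduct.map (HB.str ^ (2*m)).toLinearMap (AA.str ^ (-2 : ℤ)).toLinearMap)
                    (TensorProduct.lift σ ∘ₗ
                      TensorProduct.map (HB.str ^ (k+m+1)).toLinearMap (HB.str ^ (k+m)).toLinearMap)
                ∘ₗ (TensorProduct.tensorTensorTensorComm K H H A H).toLinearMap)
          ∘ₗ (TensorProduct.assoc K A (H ⊗[K] H) (A ⊗[K] H)).toLinearMap)
        (AA.str.toLinearMap ∘ₗ TensorProduct.lift AA.mul)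
        (TensorProduct.tensorTensorTensorComm K (A ⊗[K] (H ⊗[K] H)) A (A ⊗[K] H) A
          ((TensorProduct.assoc K A (H ⊗[K] H) A).symm
              (TensorProduct.map (LinearMap.id : A →ₗ[K] A)
                (TensorProduct.map HB.comul (LinearMap.id : A →ₗ[K] A))
                (TensorProduct.map (LinearMap.id : A →ₗ[K] A) coact (AC.comul a)))
            ⊗ₜ[K]
            (TensorProduct.assoc K A H A).symm
              (TensorProduct.map (LinearMap.id : A →ₗ[K] A) coact (AC.comul b))))

/-- (A8). -/
def CondA8 (HB : HomBialgebraStr K H) (AA : HomAlgebraStr K A) (AC : HomCoalgebraStr K A)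
    (act : H →ₗ[K] A →ₗ[K] A) (coact : A →ₗ[K] H ⊗[K] A)
    (σ : H →ₗ[K] H →ₗ[K] A) (m k : ℤ) : Prop :=
  ∀ (h : H) (b : A),
    AC.comul (act ((HB.str ^ m) h) b) =
      TensorProduct.map
        (TensorProduct.lift AA.mul
          ∘ₗ TensorProduct.map
              (TensorProduct.lift act ∘ₗ
                TensorProduct.map (HB.str ^ m).toLinearMap (AA.str ^ (-1 : ℤ)).toLinearMap)
              (TensorProduct.lift σ ∘ₗ
                TensorProduct.map (HB.str ^ (k+1)).toLinearMap (HB.str ^ (k+m+1)).toLinearMap)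
          ∘ₗ (TensorProduct.tensorTensorTensorComm K H H A H).toLinearMap)
        (TensorProduct.lift act ∘ₗ
          TensorProduct.map (HB.str ^ m).toLinearMap AA.str.toLinearMap)
        (TensorProduct.tensorTensorTensorComm K (H ⊗[K] H) H (A ⊗[K] H) A
          (TensorProduct.map HB.comul (LinearMap.id : H →ₗ[K] H) (HB.comul h)
            ⊗ₜ[K]
            (TensorProduct.assoc K A H A).symm
              (TensorProduct.map (LinearMap.id : A →ₗ[K] A) coact (AC.comul b))))

/-- (A9). -/
def CondA9 (HB : HomBialgebraStr K H) (act : H →ₗ[K] A →ₗ[K] A)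
    (coact : A →ₗ[K] H ⊗[K] A) (m : ℤ) : Prop :=
  ∀ (h : H) (b : A),
    coactMulAux HB (m-1) (LinearMap.id : A →ₗ[K] A)
      (TensorProduct.map (coact ∘ₗ (act.flip b) ∘ₗ (HB.str ^ (m+1)).toLinearMap)
        (LinearMap.id : H →ₗ[K] H) (HB.comul h))
    =
    TensorProduct.map
      (TensorProduct.lift HB.mul ∘ₗ
        TensorProduct.map (LinearMap.id : H →ₗ[K] H) (HB.str ^ m).toLinearMap)
      (TensorProduct.lift act ∘ₗ
        TensorProduct.map (HB.str ^ m).toLinearMap (LinearMap.id : A →ₗ[K] A))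
      (TensorProduct.tensorTensorTensorComm K H H H A (HB.comul h ⊗ₜ[K] coact b))

/-- The Radford `[(m,k),m]`-biproduct structure on `A ⊗ H`. -/
structure IsRadfordBiproduct (HB : HomBialgebraStr K H) (AA : HomAlgebraStr K A)
    (AC : HomCoalgebraStr K A) (act : H →ₗ[K] A →ₗ[K] A) (coact : A →ₗ[K] H ⊗[K] A)
    (σ : H →ₗ[K] H →ₗ[K] A) (m k : ℤ) (B : HomBialgebraStr K (A ⊗[K] H)) : Prop where
  mul_def : ∀ (a : A) (h : H) (b : A) (g : H),
    B.mul (a ⊗ₜ[K] h) (b ⊗ₜ[K] g) = cpMulElem HB AA act σ m k a h b g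
  one_def : B.one = AA.one ⊗ₜ[K] HB.one
  comul_def : ∀ (a : A) (h : H), B.comul (a ⊗ₜ[K] h) = scComulElem HB AC coact m a h
  counit_def : ∀ (a : A) (h : H), B.counit (a ⊗ₜ[K] h) = AC.counit a * HB.counit h
  str_def : B.str = TensorProduct.congr AA.str HB.str

/-- `S_H` is a `σ`-antipode for `(H, α)`. -/
structure IsSigmaAntipode (HB : HomBialgebraStr K H) (AA : HomAlgebraStr K A)
    (σ : H →ₗ[K] H →ₗ[K] A) (S : H →ₗ[K] H) : Prop where
  antipode_str : ∀ h : H, S (HB.str h) = HB.str (S h)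
  right : ∀ h : H,
    TensorProduct.map (TensorProduct.lift σ) (TensorProduct.lift HB.mul)
        (TensorProduct.tensorTensorTensorComm K H H H H
          (TensorProduct.map HB.comul (HB.comul ∘ₗ S) (HB.comul h)))
      = HB.counit h • (AA.one ⊗ₜ[K] HB.one)
  left : ∀ h : H,
    TensorProduct.map (TensorProduct.lift σ) (TensorProduct.lift HB.mul)
        (TensorProduct.tensorTensorTensorComm K H H H H
          (TensorProduct.map (HB.comul ∘ₗ S) HB.comul (HB.comul h)))
      = HB.counit h • (AA.one ⊗ₜ[K] HB.one)

/-- `S_A` is a convolution inverse of `id_A`. -/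
def IsConvInvOfId (AA : HomAlgebraStr K A) (AC : HomCoalgebraStr K A)
    (SA : A →ₗ[K] A) : Prop :=
  (∀ a : A, TensorProduct.lift (AA.mul ∘ₗ SA) (AC.comul a) = AC.counit a • AA.one) ∧
  (∀ a : A, TensorProduct.lift (AA.mul.compl₂ SA) (AC.comul a) = AC.counit a • AA.one)

/-- `σ` and `σinv` are convolution inverses of each other. -/
def IsConvInvPair (HB : HomBialgebraStr K H) (AA : HomAlgebraStr K A)
    (σ σinv : H →ₗ[K] H →ₗ[K] A) : Prop :=
  (∀ h g : H,
    TensorProduct.lift AA.mul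
      (TensorProduct.map (TensorProduct.lift σ) (TensorProduct.lift σinv)
        (TensorProduct.tensorTensorTensorComm K H H H H (HB.comul h ⊗ₜ[K] HB.comul g)))
    = (HB.counit h * HB.counit g) • AA.one) ∧
  (∀ h g : H,
    TensorProduct.lift AA.mul
      (TensorProduct.map (TensorProduct.lift σinv) (TensorProduct.lift σ)
        (TensorProduct.tensorTensorTensorComm K H H H H (HB.comul h ⊗ₜ[K] HB.comul g)))
    = (HB.counit h * HB.counit g) • AA.one)

/-- The Radford antipode formula
`S(a ⊗ h) = (1_A ⊗ S_H(α^{m−1}(a₍₋₁₎)α⁻²(h)))·(S_A(a₍₀₎) ⊗ 1_H)`. -/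
def radfordAntipodeElem (HB : HomBialgebraStr K H) (AA : HomAlgebraStr K A)
    (coact : A →ₗ[K] H ⊗[K] A)
    (Bmul : (A ⊗[K] H) →ₗ[K] (A ⊗[K] H) →ₗ[K] (A ⊗[K] H))
    (SH : H →ₗ[K] H) (SA : A →ₗ[K] A) (m : ℤ) (a : A) (h : H) : A ⊗[K] H :=
  TensorProduct.lift Bmul
    (TensorProduct.map
      ((TensorProduct.mk K A H AA.one) ∘ₗ SH ∘ₗ (HB.mul.flip ((HB.str ^ (-2 : ℤ)) h)) ∘ₗ
        (HB.str ^ (m - 1)).toLinearMap)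
      (((TensorProduct.mk K A H).flip HB.one) ∘ₗ SA)
      (coact a))

/-- `φ^l(l ⊗ (a ⊗ h)) = (α(l₁₁)·β⁻¹(a)) σ(α^{k+2−m}(l₁₂), α^{k+1}(h₁)) ⊗ α^{1−m}(l₂)α(h₂)`. -/
def philElem (HB : HomBialgebraStr K H) (AA : HomAlgebraStr K A)
    (act : H →ₗ[K] A →ₗ[K] A) (σ : H →ₗ[K] H →ₗ[K] A) (m k : ℤ)
    (l : H) (a : A) (h : H) : A ⊗[K] H :=
  TensorProduct.map
    (TensorProduct.lift AA.mul ∘ₗ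
      TensorProduct.map ((act.flip ((AA.str ^ (-1 : ℤ)) a)) ∘ₗ HB.str.toLinearMap)
        (TensorProduct.lift σ ∘ₗ
          TensorProduct.map (HB.str ^ (k+2-m)).toLinearMap (HB.str ^ (k+1)).toLinearMap) ∘ₗ
      (TensorProduct.assoc K H H H).toLinearMap)
    (TensorProduct.lift HB.mul ∘ₗ
      TensorProduct.map (HB.str ^ (1-m)).toLinearMap HB.str.toLinearMap)
    (TensorProduct.map (TensorProduct.map HB.comul (LinearMap.id : H →ₗ[K] H))
      (LinearMap.id : H ⊗[K] H →ₗ[K] H ⊗[K] H)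
      (TensorProduct.tensorTensorTensorComm K H H H H (HB.comul l ⊗ₜ[K] HB.comul h)))

/-- `φ^r((a ⊗ h) ⊗ l) = a σ(α^{k+1}(h₁), α^{k+1−m}(l₁)) ⊗ α(h₂)α^{1−m}(l₂)`. -/
def phirElem (HB : HomBialgebraStr K H) (AA : HomAlgebraStr K A)
    (σ : H →ₗ[K] H →ₗ[K] A) (m k : ℤ) (a : A) (h : H) (l : H) : A ⊗[K] H :=
  TensorProduct.map
    ((AA.mul a) ∘ₗ TensorProduct.lift σ ∘ₗ
      TensorProduct.map (HB.str ^ (k+1)).toLinearMap (HB.str ^ (k+1-m)).toLinearMap)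
    (TensorProduct.lift HB.mul ∘ₗ
      TensorProduct.map HB.str.toLinearMap (HB.str ^ (1-m)).toLinearMap)
    (TensorProduct.tensorTensorTensorComm K H H H H (HB.comul h ⊗ₜ[K] HB.comul l))

/-- `(M, μ, φ)` is a left `(H, α, σ̄)`-Hom module. -/
def IsLeftSigmaHomModule (HB : HomBialgebraStr K H)
    (mulM : M →ₗ[K] M →ₗ[K] M) (strM : M →ₗ[K] M)
    (σbar : H →ₗ[K] H →ₗ[K] M) (φ : H →ₗ[K] M →ₗ[K] M) : Prop :=
  (∀ (g l : H) (x : M),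
    φ (HB.str g) (φ l x)
      = TensorProduct.lift mulM
          (TensorProduct.map (strM ∘ₗ TensorProduct.lift σbar)
            ((φ.flip x) ∘ₗ TensorProduct.lift HB.mul)
            (TensorProduct.tensorTensorTensorComm K H H H H (HB.comul g ⊗ₜ[K] HB.comul l))))
  ∧ (∀ x : M, φ HB.one x = strM x)

/-- `(M, μ, φ)` is a right `(H, α, σ̄)`-Hom module. -/
def IsRightSigmaHomModule (HB : HomBialgebraStr K H)
    (mulM : M →ₗ[K] M →ₗ[K] M) (strM : M →ₗ[K] M)
    (σbar : H →ₗ[K] H →ₗ[K] M) (φ : M →ₗ[K] H →ₗ[K] M) : Prop :=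
  (∀ (x : M) (l g : H),
    φ (φ x l) (HB.str g)
      = mulM (strM x)
          (TensorProduct.lift φ
            (TensorProduct.map (TensorProduct.lift σbar) (TensorProduct.lift HB.mul)
              (TensorProduct.tensorTensorTensorComm K H H H H (HB.comul l ⊗ₜ[K] HB.comul g)))))
  ∧ (∀ x : M, φ x HB.one = strM x)

/-- `(M, μ, φ⁺, φ⁻)` is a weak `(H, α)` Hom-bimodule. -/
def IsWeakHomBimodule (HB : HomBialgebraStr K H) (strM : M →ₗ[K] M)
    (φl : H →ₗ[K] M →ₗ[K] M) (φr : M →ₗ[K] H →ₗ[K] M) : Prop :=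
  (∀ x : M, φl HB.one x = strM x) ∧ (∀ x : M, φr x HB.one = strM x) ∧
  (∀ (h : H) (x : M) (g : H), φl (HB.str h) (φr x g) = φr (φl h x) (HB.str g))

/-- A weak `m`-Hom admissible mapping system `C ⇄ A ⇄ H`. -/
structure WeakAdmissibleSystem (HB : HomBialgebraStr K H)
    (CA : HomAlgebraStr K C) (CC : HomCoalgebraStr K C)
    (coact : C →ₗ[K] H ⊗[K] C) (m : ℤ) (AB : HomBialgebraStr K A)
    (j : C →ₗ[K] A) (p : A →ₗ[K] C) (i : H →ₗ[K] A) (π : A →ₗ[K] H) : Prop where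
  c_str_eq : CA.str = CC.str
  p_j : ∀ c : C, p (j c) = c
  pi_i : ∀ h : H, π (i h) = h
  pi_mul : ∀ a b : A, π (AB.mul a b) = HB.mul (π a) (π b)
  pi_one : π AB.one = HB.one
  pi_str : ∀ a : A, π (AB.str a) = HB.str (π a)
  pi_comul : ∀ a : A, TensorProduct.map π π (AB.comul a) = HB.comul (π a)
  pi_counit : ∀ a : A, HB.counit (π a) = AB.counit a
  i_one : i HB.one = AB.one
  i_str : ∀ h : H, i (HB.str h) = AB.str (i h)
  i_comul : ∀ h : H, TensorProduct.map i i (HB.comul h) = AB.comul (i h)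
  i_counit : ∀ h : H, AB.counit (i h) = HB.counit h
  p_str : ∀ a : A, p (AB.str a) = CC.str (p a)
  p_comul : ∀ a : A, TensorProduct.map p p (AB.comul a) = CC.comul (p a)
  p_counit : ∀ a : A, CC.counit (p a) = AB.counit a
  j_mul : ∀ c d : C, j (CA.mul c d) = AB.mul (j c) (j d)
  j_one : j CA.one = AB.one
  j_str : ∀ c : C, j (CC.str c) = AB.str (j c)
  p_left_act : ∀ (h : H) (a : A),
    p (AB.mul (i ((HB.str ^ (-m)) h)) a) = HB.counit h • CC.str (p a)
  p_right_act : ∀ (a : A) (h : H),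
    p (AB.mul a (i ((HB.str ^ (-m)) h))) = HB.counit h • CC.str (p a)
  sigma_mod : ∃ σbar : H →ₗ[K] H →ₗ[K] A,
    IsLeftSigmaHomModule HB AB.mul AB.str.toLinearMap σbar
        (AB.mul ∘ₗ i ∘ₗ (HB.str ^ (-m)).toLinearMap)
      ∧ IsRightSigmaHomModule HB AB.mul AB.str.toLinearMap σbar
        (AB.mul.compl₂ (i ∘ₗ (HB.str ^ (-m)).toLinearMap))
  sub_l : ∀ c : C, ∃ y : H ⊗[K] C,
    TensorProduct.map ((HB.str ^ (-m)).toLinearMap ∘ₗ π) (LinearMap.id : A →ₗ[K] A)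
        (AB.comul (j c))
      = TensorProduct.map (LinearMap.id : H →ₗ[K] H) j y
  sub_r : ∀ c : C, ∃ z : C ⊗[K] H,
    TensorProduct.map (LinearMap.id : A →ₗ[K] A) ((HB.str ^ (-m)).toLinearMap ∘ₗ π)
        (AB.comul (j c))
      = TensorProduct.map j (LinearMap.id : H →ₗ[K] H) z
  p_col : ∀ c : C,
    TensorProduct.map (LinearMap.id : H →ₗ[K] H) p
        (TensorProduct.map ((HB.str ^ (-m)).toLinearMap ∘ₗ π) (LinearMap.id : A →ₗ[K] A)
          (AB.comul (j c)))
      = coact c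
  p_cor : ∀ c : C,
    TensorProduct.map p (LinearMap.id : H →ₗ[K] H)
        (TensorProduct.map (LinearMap.id : A →ₗ[K] A) ((HB.str ^ (-m)).toLinearMap ∘ₗ π)
          (AB.comul (j c)))
      = CC.str.symm c ⊗ₜ[K] HB.one
  split : ∀ a : A,
    TensorProduct.lift AB.mul (TensorProduct.map (j ∘ₗ p) (i ∘ₗ π) (AB.comul a)) = a

/-- The map `f : C ♯ H → A`, `c ⊗ h ↦ γ⁻¹(j(c)i(h))`. -/
def admF (AB : HomBialgebraStr K A) (j : C →ₗ[K] A) (i : H →ₗ[K] A) :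
    C ⊗[K] H →ₗ[K] A :=
  AB.str.symm.toLinearMap ∘ₗ TensorProduct.lift ((AB.mul ∘ₗ j).compl₂ i)

/-- The map `g : A → C ♯ H`, `a ↦ β(p(a₁)) ⊗ α(π(a₂))`. -/
def admG (HB : HomBialgebraStr K H) (CC : HomCoalgebraStr K C)
    (AB : HomBialgebraStr K A) (p : A →ₗ[K] C) (π : A →ₗ[K] H) :
    A →ₗ[K] C ⊗[K] H :=
  TensorProduct.map (CC.str.toLinearMap ∘ₗ p) (HB.str.toLinearMap ∘ₗ π) ∘ₗ AB.comul

end Defs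

/-- The multiplication `(a # h)(b # g) = cross(a, b; h₁, g₁) # h₂g₂` on `A ⊗ H`. -/
def crossedMul {K H A : Type*} [Field K] [AddCommGroup H] [Module K H]
    [AddCommGroup A] [Module K A] [Coalgebra K H]
    (cross : (A ⊗[K] A) ⊗[K] (H ⊗[K] H) →ₗ[K] A) (mulH : H ⊗[K] H →ₗ[K] H) :
    (A ⊗[K] H) ⊗[K] (A ⊗[K] H) →ₗ[K] A ⊗[K] H :=
  map cross mulH ∘ₗ
    (TensorProduct.assoc K (A ⊗[K] A) (H ⊗[K] H) (H ⊗[K] H)).symm.toLinearMap ∘ₗ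
    map LinearMap.id Coalgebra.comul ∘ₗ (tensorTensorTensorComm K A H A H).toLinearMap

namespace CrossedBiproductData

variable {K H A : Type*} [Field K] [AddCommGroup H] [Module K H]
    [AddCommGroup A] [Module K A] [Coalgebra K H]

open Coalgebra

/-- The projection `a ⊗ h ↦ ε(h)a`. -/
def projA : A ⊗[K] H →ₗ[K] A := (TensorProduct.rid K A).toLinearMap ∘ₗ map LinearMap.id counit

lemma lid_counit_comul {C : Type*} [AddCommGroup C] [Module K C] [Coalgebra K C] (c : C) :
    TensorProduct.lid K C (map counit LinearMap.id (comul c)) = c := by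
  have := rTensor_counit_comul (R := K) c
  rw [LinearMap.rTensor] at this
  rw [this]; simp

lemma rid_counit_comul {C : Type*} [AddCommGroup C] [Module K C] [Coalgebra K C] (c : C) :
    TensorProduct.rid K C (map LinearMap.id counit (comul c)) = c := by
  have := lTensor_counit_comul (R := K) c
  rw [LinearMap.lTensor] at this
  rw [this]; simp

lemma projA_crossedMul {cross : (A ⊗[K] A) ⊗[K] (H ⊗[K] H) →ₗ[K] A} {mulH : H ⊗[K] H →ₗ[K] H}
    (hcounit : ∀ c, counit (R := K) (mulH c) = counit (R := K) c) (a b : A) (h g : H) :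
    projA (crossedMul cross mulH ((a ⊗ₜ h) ⊗ₜ (b ⊗ₜ g))) = cross ((a ⊗ₜ b) ⊗ₜ (h ⊗ₜ g)) := by
  have e : crossedMul cross mulH ((a ⊗ₜ h) ⊗ₜ (b ⊗ₜ g)) =
      map cross mulH ((TensorProduct.assoc K (A ⊗[K] A) (H ⊗[K] H) (H ⊗[K] H)).symm
        ((a ⊗ₜ b) ⊗ₜ comul (h ⊗ₜ g))) := rfl
  rw [e]
  conv_rhs => rw [← rid_counit_comul (K := K) (h ⊗ₜ[K] g)]
  hopf_tensor_induction comul (R := K) (h ⊗ₜ[K] g) with x y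
  simp [projA, hcounit]

/-- The map `(a ⊗ b) ⊗ (h ⊗ g) ↦ a((h₁ · b)σ(h₂, g))`. -/
def crossOf (mulA : A ⊗[K] A →ₗ[K] A) (act : H ⊗[K] A →ₗ[K] A) (cocycle : H ⊗[K] H →ₗ[K] A) :
    (A ⊗[K] A) ⊗[K] (H ⊗[K] H) →ₗ[K] A :=
  mulA ∘ₗ map LinearMap.id (mulA ∘ₗ map act cocycle ∘ₗ
      (tensorTensorTensorComm K H H A H).toLinearMap ∘ₗ map comul LinearMap.id ∘ₗ
      (TensorProduct.leftComm K A H H).toLinearMap) ∘ₗ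
    (TensorProduct.assoc K A A (H ⊗[K] H)).toLinearMap

lemma crossOf_tmul (mulA : A ⊗[K] A →ₗ[K] A) (act : H ⊗[K] A →ₗ[K] A)
    (cocycle : H ⊗[K] H →ₗ[K] A) (a b : A) (h g : H) :
    crossOf mulA act cocycle ((a ⊗ₜ b) ⊗ₜ (h ⊗ₜ g)) = mulA (a ⊗ₜ mulA (map act cocycle
      (tensorTensorTensorComm K H H A H (comul h ⊗ₜ (b ⊗ₜ g))))) := by
  simp [crossOf]

end CrossedBiproductData

/-- The data underlying a Radford biproduct of ordinary bialgebras: a coalgebra `H` with a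
comultiplicative product `mulH`, a coalgebra `A` with a product `mulA`, a coaction of `H` on `A`, and
a map `cross` with `(a # h)(b # g) = cross(a, b; h₁, g₁) # h₂g₂`. -/
structure CrossedBiproductData (K H A : Type*) [Field K] [AddCommGroup H] [Module K H]
    [AddCommGroup A] [Module K A] [Coalgebra K H] [Coalgebra K A] where
  mulH : H ⊗[K] H →ₗ[K] H
  oneH : H
  mulA : A ⊗[K] A →ₗ[K] A
  oneA : A
  act : H ⊗[K] A →ₗ[K] A
  cocycle : H ⊗[K] H →ₗ[K] A
  coact : A →ₗ[K] H ⊗[K] A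
  cross : (A ⊗[K] A) ⊗[K] (H ⊗[K] H) →ₗ[K] A
  comul_mulH : ∀ c, Coalgebra.comul (R := K) (mulH c) = map mulH mulH (Coalgebra.comul c)
  counit_mulH : ∀ c, Coalgebra.counit (R := K) (mulH c) = Coalgebra.counit (R := K) c
  comul_oneH : Coalgebra.comul (R := K) oneH = oneH ⊗ₜ[K] oneH
  counit_oneH : Coalgebra.counit (R := K) oneH = 1
  mulH_one : ∀ h, mulH (h ⊗ₜ oneH) = h
  one_mulH : ∀ h, mulH (oneH ⊗ₜ h) = h
  coact_coassoc : ∀ a, TensorProduct.assoc K H H A (map Coalgebra.comul LinearMap.id (coact a))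
    = map LinearMap.id coact (coact a)
  counit_coact : ∀ a, TensorProduct.lid K A (map Coalgebra.counit LinearMap.id (coact a)) = a
  cross_one_one : ∀ t, cross (t ⊗ₜ (oneH ⊗ₜ oneH)) = mulA t
  cross_act : ∀ h b, cross ((oneA ⊗ₜ b) ⊗ₜ (h ⊗ₜ oneH)) = act (h ⊗ₜ b)
  cross_cocycle : ∀ c, cross ((oneA ⊗ₜ oneA) ⊗ₜ c) = cocycle c
  cross_counit : ∀ a g, cross ((a ⊗ₜ oneA) ⊗ₜ (oneH ⊗ₜ g)) = Coalgebra.counit (R := K) g • a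
  cross_eq : ∀ a b h g, cross ((a ⊗ₜ b) ⊗ₜ (h ⊗ₜ g)) = mulA (a ⊗ₜ mulA (map act cocycle
    (TensorProduct.tensorTensorTensorComm K H H A H (Coalgebra.comul h ⊗ₜ (b ⊗ₜ g)))))

namespace CrossedBiproductData

variable {K H A : Type*} [Field K] [AddCommGroup H] [Module K H]
    [AddCommGroup A] [Module K A] [Coalgebra K H] [Coalgebra K A]
    (X : CrossedBiproductData K H A)

open Coalgebra

/-- The crossed product multiplication on `A ⊗ H`. -/
def mulB : (A ⊗[K] H) ⊗[K] (A ⊗[K] H) →ₗ[K] A ⊗[K] H :=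
  crossedMul X.cross X.mulH

/-- The map `a ↦ (a₁ ⊗ a₂₍₋₁₎) ⊗ a₂₍₀₎`. -/
def comulCoact : A →ₗ[K] (A ⊗[K] H) ⊗[K] A :=
  (TensorProduct.assoc K A H A).symm.toLinearMap ∘ₗ map LinearMap.id X.coact ∘ₗ comul

/-- The smash coproduct comultiplication on `A ⊗ H`. -/
def comulB : A ⊗[K] H →ₗ[K] (A ⊗[K] H) ⊗[K] (A ⊗[K] H) :=
  map (map LinearMap.id X.mulH ∘ₗ (TensorProduct.assoc K A H H).toLinearMap) LinearMap.id ∘ₗ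
    (tensorTensorTensorComm K (A ⊗[K] H) A H H).toLinearMap ∘ₗ map X.comulCoact comul

/-- The componentwise multiplication on the tensor square of `A ⊗ H`. -/
def mulBB : ((A ⊗[K] H) ⊗[K] (A ⊗[K] H)) ⊗[K] ((A ⊗[K] H) ⊗[K] (A ⊗[K] H)) →ₗ[K]
    (A ⊗[K] H) ⊗[K] (A ⊗[K] H) :=
  map X.mulB X.mulB ∘ₗ
    (tensorTensorTensorComm K (A ⊗[K] H) (A ⊗[K] H) (A ⊗[K] H) (A ⊗[K] H)).toLinearMap

lemma mulB_tmul (a b : A) (h g : H) : X.mulB ((a ⊗ₜ h) ⊗ₜ (b ⊗ₜ g)) =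
    map X.cross X.mulH ((TensorProduct.assoc K (A ⊗[K] A) (H ⊗[K] H) (H ⊗[K] H)).symm
      ((a ⊗ₜ b) ⊗ₜ comul (h ⊗ₜ g))) := rfl

lemma comulB_tmul (a : A) (h : H) : X.comulB (a ⊗ₜ h) =
  map (map LinearMap.id X.mulH ∘ₗ (TensorProduct.assoc K A H H).toLinearMap) LinearMap.id
    (tensorTensorTensorComm K (A ⊗[K] H) A H H (X.comulCoact a ⊗ₜ comul h)) := rfl

lemma mulBB_tmul (x y z w : A ⊗[K] H) :
    X.mulBB ((x ⊗ₜ y) ⊗ₜ (z ⊗ₜ w)) = X.mulB (x ⊗ₜ z) ⊗ₜ X.mulB (y ⊗ₜ w) := rfl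

lemma mulB_one_one (a : A) (g : H) :
    X.mulB ((a ⊗ₜ X.oneH) ⊗ₜ (X.oneA ⊗ₜ g)) = a ⊗ₜ g := by
  conv_rhs => rw [← lid_counit_comul (K := K) g]
  rw [mulB_tmul, comul_tmul, X.comul_oneH]
  hopf_tensor_induction comul (R := K) g with x y
  simp [X.cross_counit, X.one_mulH, smul_tmul]

lemma mulB_right_one (a b : A) :
    X.mulB ((a ⊗ₜ X.oneH) ⊗ₜ (b ⊗ₜ X.oneH)) = X.mulA (a ⊗ₜ b) ⊗ₜ X.oneH := by
  simp [mulB_tmul, X.comul_oneH, X.cross_one_one, X.one_mulH]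

lemma mulB_one_left (h : H) (b : A) :
    X.mulB ((X.oneA ⊗ₜ h) ⊗ₜ (b ⊗ₜ X.oneH)) =
      map (X.act ∘ₗ (TensorProduct.mk K H A).flip b) LinearMap.id (comul h) := by
  rw [mulB_tmul, comul_tmul, X.comul_oneH]
  hopf_tensor_induction comul (R := K) h with x y
  simp [X.cross_act, X.mulH_one]

lemma mulB_one_tmul_one_tmul (h g : H) :
    X.mulB ((X.oneA ⊗ₜ h) ⊗ₜ (X.oneA ⊗ₜ g)) =
      map X.cocycle X.mulH (comul (h ⊗ₜ[K] g)) := by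
  rw [mulB_tmul]
  hopf_tensor_induction comul (R := K) (h ⊗ₜ[K] g) with x y
  simp [X.cross_cocycle]

lemma comulB_one_right (a : A) : X.comulB (a ⊗ₜ X.oneH) =
    map LinearMap.id ((TensorProduct.mk K A H).flip X.oneH) (X.comulCoact a) := by
  rw [comulB_tmul, X.comul_oneH]
  hopf_tensor_induction X.comulCoact a with x y
  hopf_tensor_induction x with z w
  simp [X.mulH_one]

/-- The projection `a ⊗ h ↦ ε(a)h`. -/
def projH : A ⊗[K] H →ₗ[K] H := (TensorProduct.lid K H).toLinearMap ∘ₗ map counit LinearMap.id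

/-- `(n ⊗ w) ⊗ t ↦ nt ⊗ w`. -/
def coactMul : (H ⊗[K] A) ⊗[K] H →ₗ[K] H ⊗[K] A :=
  map X.mulH LinearMap.id ∘ₗ (TensorProduct.rightComm K H A H).toLinearMap

/-- The map `h ⊗ (b ⊗ g) ↦ cross(1, b; h, g)`. -/
def crossOne : H ⊗[K] (A ⊗[K] H) →ₗ[K] A :=
  X.cross ∘ₗ (tensorTensorTensorComm K A H A H).toLinearMap ∘ₗ
    map (TensorProduct.mk K A H X.oneA) LinearMap.id

/-- The twisted comodule cocycle condition. -/
def IsTwisted : Prop := ∀ (a : A) (g : H),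
  map (X.mulB ∘ₗ (TensorProduct.mk K (A ⊗[K] H) (A ⊗[K] H)).flip (X.oneA ⊗ₜ g)) LinearMap.id
      (X.comulCoact a)
    = map (map LinearMap.id (X.mulH ∘ₗ (TensorProduct.mk K H H).flip g)) LinearMap.id
      (X.comulCoact a)

/-- The counital compatibility conditions. -/
structure CounitConditions : Prop where
  counit_mulA : ∀ a b, counit (R := K) (X.mulA (a ⊗ₜ b)) = counit (R := K) a * counit (R := K) b
  counit_oneA : counit (R := K) X.oneA = 1
  counit_act : ∀ h a, counit (R := K) (X.act (h ⊗ₜ a)) = counit (R := K) h * counit (R := K) a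
  counit_cocycle : ∀ h g, counit (R := K) (X.cocycle (h ⊗ₜ g)) =
    counit (R := K) h * counit (R := K) g

/-- The compatibility conditions between the units and the comultiplication and coaction. -/
structure UnitConditions : Prop where
  comul_oneA : comul (R := K) X.oneA = X.oneA ⊗ₜ X.oneA
  coact_oneA : X.coact X.oneA = X.oneH ⊗ₜ X.oneA

/-- The compatibility conditions between multiplications and comultiplications. -/
structure MulConditions : Prop where
  comul_cocycle : ∀ c, comul (R := K) (X.cocycle c) = map X.cocycle X.cocycle (comul c)
  coact_mulA : ∀ a b, X.coact (X.mulA (a ⊗ₜ b)) =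
    map X.mulH X.mulA (tensorTensorTensorComm K H A H A (X.coact a ⊗ₜ X.coact b))
  coact_cocycle : ∀ c, X.coactMul (map (X.coact ∘ₗ X.cocycle) X.mulH (comul c)) =
    map X.mulH X.cocycle (comul c)
  comul_mulA : ∀ a b, comul (R := K) (X.mulA (a ⊗ₜ b)) =
    map (X.cross ∘ₗ (tensorTensorTensorComm K A H A H).toLinearMap) X.mulA
      (tensorTensorTensorComm K (A ⊗[K] H) A (A ⊗[K] H) A (X.comulCoact a ⊗ₜ X.comulCoact b))
  comul_act : ∀ h b, comul (R := K) (X.act (h ⊗ₜ b)) =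
    map X.crossOne X.act
      (tensorTensorTensorComm K H H (A ⊗[K] H) A (comul h ⊗ₜ X.comulCoact b))
  coact_act : ∀ h b,
    X.coactMul (map (X.coact ∘ₗ X.act ∘ₗ (TensorProduct.mk K H A).flip b) LinearMap.id (comul h)) =
      map X.mulH X.act (tensorTensorTensorComm K H H H A (comul h ⊗ₜ X.coact b))

variable {X}

lemma comulB_one_left (hu : X.UnitConditions) (h : H) : X.comulB (X.oneA ⊗ₜ h) =
    map (TensorProduct.mk K A H X.oneA) (TensorProduct.mk K A H X.oneA) (comul h) := by
  have : X.comulCoact X.oneA = (X.oneA ⊗ₜ X.oneH) ⊗ₜ X.oneA := by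
    simp [comulCoact, hu.comul_oneA, hu.coact_oneA]
  rw [comulB_tmul, this]
  hopf_tensor_induction comul (R := K) h with x y
  simp [X.one_mulH]

lemma comul_four {C : Type*} [AddCommGroup C] [Module K C] [Coalgebra K C] (c : C) :
    map LinearMap.id (map comul LinearMap.id) (map LinearMap.id comul (comul (R := K) c)) =
      map LinearMap.id (TensorProduct.assoc K C C C).symm.toLinearMap
        (TensorProduct.assoc K C C (C ⊗[K] C) (map comul comul (comul (R := K) c))) := by
  have e1 : map comul comul (comul (R := K) c) =
      map LinearMap.id comul (map comul LinearMap.id (comul (R := K) c)) := by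
    hopf_tensor_induction comul (R := K) c with x y
    simp
  have e2 : map comul LinearMap.id (comul (R := K) c) =
      (TensorProduct.assoc K C C C).symm (map LinearMap.id comul (comul (R := K) c)) := by
    rw [LinearEquiv.eq_symm_apply]; exact coassoc_apply c
  have e3 (d : C) : map comul LinearMap.id (comul (R := K) d) =
      (TensorProduct.assoc K C C C).symm (map LinearMap.id comul (comul (R := K) d)) := by
    rw [LinearEquiv.eq_symm_apply]; exact coassoc_apply d
  rw [e1, e2]
  hopf_tensor_induction comul (R := K) c with x y
  simp only [map_tmul, e3]
  hopf_tensor_induction comul (R := K) y with z w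
  simp

lemma comulB_mulB_cocycle (ht : X.IsTwisted) (hu : X.UnitConditions) (a : A) (g : H) :
    X.mulBB (X.comulB (a ⊗ₜ X.oneH) ⊗ₜ X.comulB (X.oneA ⊗ₜ g)) = X.comulB (a ⊗ₜ g) := by
  rw [comulB_one_right, comulB_one_left hu, comulB_tmul]
  hopf_tensor_induction comul (R := K) g with g₁ g₂
  trans map LinearMap.id ((TensorProduct.mk K A H).flip g₂)
    (map (X.mulB ∘ₗ (TensorProduct.mk K (A ⊗[K] H) (A ⊗[K] H)).flip (X.oneA ⊗ₜ g₁)) LinearMap.id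
      (X.comulCoact a))
  · hopf_tensor_induction X.comulCoact a with x y
    simp [mulBB_tmul, mulB_one_one]
  · rw [ht]
    hopf_tensor_induction X.comulCoact a with x y
    hopf_tensor_induction x with z w
    simp

lemma comulB_mulB_right_one (hm : X.MulConditions) (a b : A) :
    X.mulBB (X.comulB (a ⊗ₜ X.oneH) ⊗ₜ X.comulB (b ⊗ₜ X.oneH)) =
      X.comulB (X.mulA (a ⊗ₜ b) ⊗ₜ X.oneH) := by
  simp only [comulB_one_right]
  conv_rhs => rw [comulCoact]
  simp only [LinearMap.comp_apply, hm.comul_mulA]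
  simp only [comulCoact, LinearMap.comp_apply]
  hopf_tensor_induction comul (R := K) a with a₁ a₂
  hopf_tensor_induction comul (R := K) b with b₁ b₂
  let G : (H ⊗[K] (H ⊗[K] A)) ⊗[K] (H ⊗[K] (H ⊗[K] A)) →ₗ[K] (A ⊗[K] H) ⊗[K] (A ⊗[K] H) :=
    map LinearMap.id ((TensorProduct.mk K A H).flip X.oneH) ∘ₗ
    (TensorProduct.assoc K A H A).symm.toLinearMap ∘ₗ
      map (X.cross ∘ₗ TensorProduct.mk K _ _ (a₁ ⊗ₜ b₁)) (map X.mulH X.mulA) ∘ₗ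
      map LinearMap.id (tensorTensorTensorComm K H A H A).toLinearMap ∘ₗ
      (tensorTensorTensorComm K H (H ⊗[K] A) H (H ⊗[K] A)).toLinearMap
  trans G (TensorProduct.assoc K H H A (map comul LinearMap.id (X.coact a₂)) ⊗ₜ
    TensorProduct.assoc K H H A (map comul LinearMap.id (X.coact b₂)))
  · simp only [map_tmul, LinearMap.id_apply]
    hopf_tensor_induction X.coact a₂ with x z
    hopf_tensor_induction X.coact b₂ with y w
    simp only [LinearEquiv.coe_coe, assoc_symm_tmul, map_tmul, LinearMap.id_apply,
      LinearMap.flip_apply, mk_apply, mulBB_tmul, mulB_right_one]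
    simp only [mulB_tmul, comul_tmul]
    hopf_tensor_induction comul (R := K) x with x₁ x₂
    hopf_tensor_induction comul (R := K) y with y₁ y₂
    simp [G]
  · rw [X.coact_coassoc, X.coact_coassoc]
    simp only [map_tmul, LinearMap.id_apply]
    hopf_tensor_induction X.coact a₂ with x z
    hopf_tensor_induction X.coact b₂ with y w
    simp [hm.coact_mulA]
    hopf_tensor_induction X.coact z with x' z'
    hopf_tensor_induction X.coact w with y' w'
    simp [G]

/-- The reassociation `u ⊗ ((n ⊗ w) ⊗ v) ↦ (u ⊗ n) ⊗ (w ⊗ v)`. -/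
def reassoc : A ⊗[K] ((H ⊗[K] A) ⊗[K] H) →ₗ[K] (A ⊗[K] H) ⊗[K] (A ⊗[K] H) :=
  (TensorProduct.assoc K A H (A ⊗[K] H)).symm.toLinearMap ∘ₗ
    map LinearMap.id (TensorProduct.assoc K H A H).toLinearMap

lemma comulB_mulB_one_tmul_one_tmul (hu : X.UnitConditions) (hm : X.MulConditions) (h g : H) :
    X.mulBB (X.comulB (X.oneA ⊗ₜ h) ⊗ₜ X.comulB (X.oneA ⊗ₜ g)) =
      X.comulB (X.mulB ((X.oneA ⊗ₜ h) ⊗ₜ (X.oneA ⊗ₜ g))) := by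
  have e1 : X.mulBB (X.comulB (X.oneA ⊗ₜ h) ⊗ₜ X.comulB (X.oneA ⊗ₜ g)) =
      map (map X.cocycle X.mulH) (map X.cocycle X.mulH)
        (map comul comul (comul (R := K) (h ⊗ₜ[K] g))) := by
    rw [comulB_one_left hu, comulB_one_left hu, comul_tmul]
    hopf_tensor_induction comul (R := K) h with h₁ h₂
    hopf_tensor_induction comul (R := K) g with g₁ g₂
    simp [mulBB_tmul, mulB_one_tmul_one_tmul]
  rw [e1, mulB_one_tmul_one_tmul]
  generalize h ⊗ₜ[K] g = c
  trans reassoc (map X.cocycle (map (map X.mulH X.cocycle) X.mulH)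
    (map LinearMap.id (map comul LinearMap.id) (map LinearMap.id comul (comul (R := K) c))))
  · rw [comul_four]
    hopf_tensor_induction comul (R := K) c with c₁ c₂
    simp only [map_tmul]
    hopf_tensor_induction comul (R := K) c₁ with c₁₁ c₁₂
    hopf_tensor_induction comul (R := K) c₂ with c₂₁ c₂₂
    simp [reassoc]
  trans reassoc (map X.cocycle
    (map (X.coactMul ∘ₗ map (X.coact ∘ₗ X.cocycle) X.mulH) X.mulH)
    (map LinearMap.id (map comul LinearMap.id) (map LinearMap.id comul (comul (R := K) c))))
  · hopf_tensor_induction comul (R := K) c with c₁ c₂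
    simp only [map_tmul]
    hopf_tensor_induction comul (R := K) c₂ with c₂₁ c₂₂
    simp [hm.coact_cocycle]
  · rw [comul_four]
    hopf_tensor_induction comul (R := K) c with c₁ c₂
    simp only [map_tmul, comulB_tmul, X.comul_mulH, comulCoact, LinearMap.comp_apply,
      hm.comul_cocycle]
    hopf_tensor_induction comul (R := K) c₁ with c₁₁ c₁₂
    hopf_tensor_induction comul (R := K) c₂ with c₂₁ c₂₂
    simp only [map_tmul, assoc_tmul, LinearMap.id_apply, LinearEquiv.coe_coe, assoc_symm_tmul,
      LinearMap.comp_apply]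
    hopf_tensor_induction X.coact (X.cocycle c₁₂) with x y
    simp [reassoc, coactMul]

/-- `((u ⊗ z) ⊗ (h₁ ⊗ (t ⊗ h₄))) ↦ (cross(1, u; h₁) ⊗ ψ(z ⊗ t)) ⊗ h₄`, reassociated. -/
def actShuffle (X : CrossedBiproductData K H A) (ψ : A ⊗[K] (H ⊗[K] H) →ₗ[K] H ⊗[K] A) :
    ((A ⊗[K] H) ⊗[K] A) ⊗[K] (H ⊗[K] ((H ⊗[K] H) ⊗[K] H)) →ₗ[K]
      (A ⊗[K] H) ⊗[K] (A ⊗[K] H) :=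
  reassoc ∘ₗ map (X.crossOne ∘ₗ (TensorProduct.comm K (A ⊗[K] H) H).toLinearMap)
      (map ψ LinearMap.id ∘ₗ (TensorProduct.assoc K A (H ⊗[K] H) H).symm.toLinearMap) ∘ₗ
    (tensorTensorTensorComm K (A ⊗[K] H) A H ((H ⊗[K] H) ⊗[K] H)).toLinearMap

lemma actShuffle_congr (ψ₁ ψ₂ : A ⊗[K] (H ⊗[K] H) →ₗ[K] H ⊗[K] A)
    (hψ : ∀ z h, ψ₁ (z ⊗ₜ comul h) = ψ₂ (z ⊗ₜ comul h)) (t : (A ⊗[K] H) ⊗[K] A) (h : H) :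
    actShuffle X ψ₁ (t ⊗ₜ map LinearMap.id (TensorProduct.assoc K H H H).symm.toLinearMap
        (TensorProduct.assoc K H H (H ⊗[K] H) (map comul comul (comul (R := K) h)))) =
      actShuffle X ψ₂ (t ⊗ₜ map LinearMap.id (TensorProduct.assoc K H H H).symm.toLinearMap
        (TensorProduct.assoc K H H (H ⊗[K] H) (map comul comul (comul (R := K) h)))) := by
  rw [← comul_four]
  hopf_tensor_induction comul (R := K) h with h₁ h₂
  simp only [map_tmul]
  hopf_tensor_induction comul (R := K) h₂ with h₂₁ h₂₂
  hopf_tensor_induction t with u z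
  simp [actShuffle, hψ]

lemma comulB_mulB_one_left (hu : X.UnitConditions) (hm : X.MulConditions) (h : H) (b : A) :
    X.mulBB (X.comulB (X.oneA ⊗ₜ h) ⊗ₜ X.comulB (b ⊗ₜ X.oneH)) =
      X.comulB (X.mulB ((X.oneA ⊗ₜ h) ⊗ₜ (b ⊗ₜ X.oneH))) := by
  rw [comulB_one_left hu, comulB_one_right, mulB_one_left]
  let ψ₁ : A ⊗[K] (H ⊗[K] H) →ₗ[K] H ⊗[K] A :=
    X.coactMul ∘ₗ
      map (X.coact ∘ₗ X.act ∘ₗ (TensorProduct.comm K A H).toLinearMap) LinearMap.id ∘ₗ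
      (TensorProduct.assoc K A H H).symm.toLinearMap
  let ψ₂ : A ⊗[K] (H ⊗[K] H) →ₗ[K] H ⊗[K] A :=
    map X.mulH X.act ∘ₗ (tensorTensorTensorComm K H H H A).toLinearMap ∘ₗ
      (TensorProduct.comm K (H ⊗[K] A) (H ⊗[K] H)).toLinearMap ∘ₗ map X.coact LinearMap.id
  have hψ (z : A) (h : H) : ψ₁ (z ⊗ₜ comul h) = ψ₂ (z ⊗ₜ comul h) := by
    trans X.coactMul (map (X.coact ∘ₗ X.act ∘ₗ (TensorProduct.mk K H A).flip z) LinearMap.id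
      (comul h))
    · simp only [ψ₁, LinearMap.comp_apply]
      hopf_tensor_induction comul (R := K) h with x y
      simp
    · rw [hm.coact_act]
      simp [ψ₂]
  trans actShuffle X ψ₂ (X.comulCoact b ⊗ₜ
    map LinearMap.id (TensorProduct.assoc K H H H).symm.toLinearMap
      (TensorProduct.assoc K H H (H ⊗[K] H) (map comul comul (comul (R := K) h))))
  · hopf_tensor_induction comul (R := K) h with h₁ h₂
    simp only [comulCoact, LinearMap.comp_apply, map_tmul]
    hopf_tensor_induction comul (R := K) b with b₁ b₂
    let G : (H ⊗[K] (H ⊗[K] A)) ⊗[K] (H ⊗[K] (H ⊗[K] (H ⊗[K] H))) →ₗ[K]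
        (A ⊗[K] H) ⊗[K] (A ⊗[K] H) :=
      (TensorProduct.assoc K A H (A ⊗[K] H)).symm.toLinearMap ∘ₗ
      map (X.crossOne ∘ₗ (TensorProduct.comm K (A ⊗[K] H) H).toLinearMap ∘ₗ
          map (TensorProduct.mk K A H b₁) LinearMap.id)
        (map (X.mulH ∘ₗ (TensorProduct.comm K H H).toLinearMap)
          (map (X.act ∘ₗ (TensorProduct.comm K A H).toLinearMap) LinearMap.id ∘ₗ
            (TensorProduct.assoc K A H H).symm.toLinearMap) ∘ₗ
          (tensorTensorTensorComm K H A H (H ⊗[K] H)).toLinearMap) ∘ₗ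
      (tensorTensorTensorComm K H (H ⊗[K] A) H (H ⊗[K] (H ⊗[K] H))).toLinearMap
    trans G (TensorProduct.assoc K H H A (map comul LinearMap.id (X.coact b₂)) ⊗ₜ
      TensorProduct.assoc K H H (H ⊗[K] H) (comul h₁ ⊗ₜ comul h₂))
    · simp only [map_tmul, LinearMap.id_apply]
      hopf_tensor_induction X.coact b₂ with y w
      simp only [LinearEquiv.coe_coe, assoc_symm_tmul, map_tmul, LinearMap.id_apply,
        LinearMap.flip_apply, mk_apply, mulBB_tmul, mulB_one_left]
      simp only [mulB_tmul, comul_tmul]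
      hopf_tensor_induction comul (R := K) y with y₁ y₂
      hopf_tensor_induction comul (R := K) h₁ with h₁₁ h₁₂
      hopf_tensor_induction comul (R := K) h₂ with h₂₁ h₂₂
      simp [G, crossOne]
    · rw [X.coact_coassoc]
      simp only [map_tmul, LinearMap.id_apply]
      hopf_tensor_induction X.coact b₂ with y w
      hopf_tensor_induction comul (R := K) h₁ with h₁₁ h₁₂
      hopf_tensor_induction comul (R := K) h₂ with h₂₁ h₂₂
      simp [actShuffle, ψ₂]
      hopf_tensor_induction X.coact w with y' w'
      simp [G, reassoc]
  · rw [← actShuffle_congr ψ₁ ψ₂ hψ]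
    hopf_tensor_induction comul (R := K) h with h₁ h₂
    simp only [map_tmul, comulB_tmul, LinearMap.comp_apply, LinearMap.id_apply]
    simp only [comulCoact, LinearMap.comp_apply, LinearMap.flip_apply, mk_apply, hm.comul_act]
    hopf_tensor_induction comul (R := K) b with b₁ b₂
    simp only [map_tmul, LinearMap.id_apply]
    hopf_tensor_induction X.coact b₂ with y w
    hopf_tensor_induction comul (R := K) h₁ with h₁₁ h₁₂
    hopf_tensor_induction comul (R := K) h₂ with h₂₁ h₂₂
    simp [actShuffle, ψ₁]
    hopf_tensor_induction X.coact (X.act (h₁₂ ⊗ₜ w)) with n w'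
    simp [reassoc, coactMul]

lemma mulBB_assoc
    (ha : ∀ x y z, X.mulB (X.mulB (x ⊗ₜ y) ⊗ₜ z) = X.mulB (x ⊗ₜ X.mulB (y ⊗ₜ z)))
    (x y z : (A ⊗[K] H) ⊗[K] (A ⊗[K] H)) :
    X.mulBB (X.mulBB (x ⊗ₜ y) ⊗ₜ z) = X.mulBB (x ⊗ₜ X.mulBB (y ⊗ₜ z)) := by
  hopf_tensor_induction x with x₁ x₂
  hopf_tensor_induction y with y₁ y₂
  hopf_tensor_induction z with z₁ z₂
  simp [mulBB_tmul, ha]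

theorem comulB_mulB
    (ha : ∀ x y z, X.mulB (X.mulB (x ⊗ₜ y) ⊗ₜ z) = X.mulB (x ⊗ₜ X.mulB (y ⊗ₜ z)))
    (ht : X.IsTwisted) (hu : X.UnitConditions) (hm : X.MulConditions) (x y : A ⊗[K] H) :
    X.comulB (X.mulB (x ⊗ₜ y)) = X.mulBB (X.comulB x ⊗ₜ X.comulB y) := by
  have hleft (a : A) (y : A ⊗[K] H) : X.comulB (X.mulB ((a ⊗ₜ X.oneH) ⊗ₜ y)) =
      X.mulBB (X.comulB (a ⊗ₜ X.oneH) ⊗ₜ X.comulB y) := by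
    hopf_tensor_induction y with b g
    rw [← X.mulB_one_one b g, ← ha, X.mulB_right_one, X.mulB_one_one, X.mulB_one_one,
      ← comulB_mulB_cocycle ht hu, ← comulB_mulB_right_one hm, mulBB_assoc ha,
      comulB_mulB_cocycle ht hu]
  have hright (x : A ⊗[K] H) (g : H) : X.comulB (X.mulB (x ⊗ₜ (X.oneA ⊗ₜ g))) =
      X.mulBB (X.comulB x ⊗ₜ X.comulB (X.oneA ⊗ₜ g)) := by
    hopf_tensor_induction x with a h
    rw [← X.mulB_one_one a h, ha, hleft, ← comulB_mulB_one_tmul_one_tmul hu hm,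
      ← mulBB_assoc ha, comulB_mulB_cocycle ht hu, X.mulB_one_one]
  hopf_tensor_induction x with a h
  hopf_tensor_induction y with b g
  rw [← X.mulB_one_one a h, ← X.mulB_one_one b g, ha, hleft, ← ha, hright,
    ← comulB_mulB_one_left hu hm, X.mulB_one_one, X.mulB_one_one,
    mulBB_assoc ha, comulB_mulB_cocycle ht hu, ← mulBB_assoc ha, comulB_mulB_cocycle ht hu]

lemma counit_cross (hc : X.CounitConditions) (a b : A) (h g : H) :
    counit (R := K) (X.cross ((a ⊗ₜ b) ⊗ₜ (h ⊗ₜ g))) =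
      counit (R := K) a * counit (R := K) b * (counit (R := K) h * counit (R := K) g) := by
  rw [X.cross_eq, hc.counit_mulA]
  have e : counit (R := K) (X.mulA (map X.act X.cocycle
      (tensorTensorTensorComm K H H A H (comul h ⊗ₜ (b ⊗ₜ g))))) =
      counit (R := K) (TensorProduct.lid K H (map counit LinearMap.id (comul h))) *
        (counit (R := K) b * counit (R := K) g) := by
    hopf_tensor_induction comul (R := K) h with x y
    simp [hc.counit_mulA, hc.counit_act, hc.counit_cocycle]
    ring
  rw [e, lid_counit_comul]
  ring

lemma projA_mulB (a b : A) (h g : H) :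
    projA (X.mulB ((a ⊗ₜ h) ⊗ₜ (b ⊗ₜ g))) = X.cross ((a ⊗ₜ b) ⊗ₜ (h ⊗ₜ g)) :=
  projA_crossedMul X.counit_mulH a b h g

lemma projH_mulB (hc : X.CounitConditions) (x y : A ⊗[K] H) :
    projH (X.mulB (x ⊗ₜ y)) = X.mulH (projH x ⊗ₜ projH y) := by
  hopf_tensor_induction x with a h
  hopf_tensor_induction y with b g
  have e : counit (R := K) ∘ₗ X.cross ∘ₗ TensorProduct.mk K _ _ (a ⊗ₜ b) =
      (counit (R := K) a * counit (R := K) b) • counit (R := K) := by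
    ext h g
    simp [counit_cross hc, mul_comm]
  have e' (c : H ⊗[K] H) : counit (R := K) (X.cross ((a ⊗ₜ b) ⊗ₜ c)) =
      (counit (R := K) a * counit (R := K) b) * counit (R := K) c := LinearMap.congr_fun e c
  trans TensorProduct.lid K H ((counit (R := K) a * counit (R := K) b) ⊗ₜ X.mulH
    (TensorProduct.lid K _ (map counit LinearMap.id (comul (R := K) (h ⊗ₜ[K] g)))))
  · rw [mulB_tmul]
    hopf_tensor_induction comul (R := K) (h ⊗ₜ[K] g) with x y
    simp [projH, e', smul_smul, mul_comm]
  · rw [lid_counit_comul]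
    simp [projH, smul_tmul, smul_smul, mul_comm]

/-- The counit of `A ⊗ H`. -/
def counitB : A ⊗[K] H →ₗ[K] K := counit ∘ₗ projA

lemma counitB_tmul (a : A) (h : H) :
    counitB (K := K) (a ⊗ₜ h) = counit (R := K) a * counit (R := K) h := by
  simp [counitB, projA, mul_comm]

lemma counitB_mulB (hc : X.CounitConditions) (x y : A ⊗[K] H) :
    counitB (X.mulB (x ⊗ₜ y)) = counitB x * counitB y := by
  hopf_tensor_induction x with a h
  hopf_tensor_induction y with b g
  rw [counitB_tmul, counitB_tmul, counitB, LinearMap.comp_apply, projA_mulB, counit_cross hc]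
  ring

lemma counitConditions
    (hmul : ∀ x y, counitB (X.mulB (x ⊗ₜ y)) = counitB (K := K) x * counitB y)
    (hone : counitB (K := K) (X.oneA ⊗ₜ[K] X.oneH) = 1) : X.CounitConditions := by
  have h1 : counit (R := K) X.oneA = 1 := by
    simpa [counitB_tmul, X.counit_oneH] using hone
  have key (a b : A) (h g : H) : counit (R := K) (X.cross ((a ⊗ₜ b) ⊗ₜ (h ⊗ₜ g))) =
      counit (R := K) a * counit (R := K) h * (counit (R := K) b * counit (R := K) g) := by
    rw [← projA_mulB, ← counitB_tmul, ← counitB_tmul, ← hmul]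
    rfl
  refine ⟨fun a b ↦ ?_, h1, fun h a ↦ ?_, fun h g ↦ ?_⟩
  · rw [← X.cross_one_one, key]; simp [X.counit_oneH]
  · rw [← X.cross_act, key]; simp [X.counit_oneH, h1]
  · rw [← X.cross_cocycle, key]; simp [h1]

lemma comulB_one (hu : X.UnitConditions) :
    X.comulB (X.oneA ⊗ₜ X.oneH) = (X.oneA ⊗ₜ X.oneH) ⊗ₜ (X.oneA ⊗ₜ X.oneH) := by
  rw [comulB_one_left hu, X.comul_oneH]; simp

lemma map_projA_projA_comulB (x : A ⊗[K] H) :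
    map projA projA (X.comulB x) = comul (R := K) (projA x) := by
  hopf_tensor_induction x with a h
  have hA : map LinearMap.id
      ((TensorProduct.lid K A).toLinearMap ∘ₗ map counit LinearMap.id ∘ₗ X.coact)
      (comul (R := K) a) = comul a := by
    rw [show (TensorProduct.lid K A).toLinearMap ∘ₗ map counit LinearMap.id ∘ₗ X.coact =
      LinearMap.id from LinearMap.ext X.counit_coact]
    simp
  trans TensorProduct.lid K _
    (counit (R := K) (TensorProduct.lid K H (map counit LinearMap.id (comul h))) ⊗ₜ
      map LinearMap.id
        ((TensorProduct.lid K A).toLinearMap ∘ₗ map counit LinearMap.id ∘ₗ X.coact) (comul a))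
  · rw [comulB_tmul, comulCoact]
    simp only [LinearMap.comp_apply]
    hopf_tensor_induction comul (R := K) h with h₁ h₂
    hopf_tensor_induction comul (R := K) a with a₁ a₂
    simp only [map_tmul, LinearMap.comp_apply]
    hopf_tensor_induction X.coact a₂ with n w
    simp [projA, X.counit_mulH, smul_tmul, smul_smul, mul_comm, mul_left_comm]
  · rw [lid_counit_comul, hA]; simp [projA]

lemma map_projH_projA_comulB (a : A) (h : H) :
    map projH projA (X.comulB (a ⊗ₜ h)) = X.coactMul (X.coact a ⊗ₜ h) := by
  trans X.coactMul (X.coact (TensorProduct.lid K A (map counit LinearMap.id (comul a))) ⊗ₜ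
    TensorProduct.rid K H (map LinearMap.id counit (comul h)))
  · rw [comulB_tmul, comulCoact]
    simp only [LinearMap.comp_apply]
    hopf_tensor_induction comul (R := K) h with h₁ h₂
    hopf_tensor_induction comul (R := K) a with a₁ a₂
    trans TensorProduct.lid K _ ((counit (R := K) a₁ * counit (R := K) h₂) ⊗ₜ
      X.coactMul (X.coact a₂ ⊗ₜ h₁))
    swap
    · simp [smul_tmul, smul_smul, mul_comm]
    simp only [map_tmul]
    hopf_tensor_induction X.coact a₂ with n w
    simp [projA, projH, coactMul, smul_tmul, smul_smul, mul_comm]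
  · rw [lid_counit_comul, rid_counit_comul]

lemma coactMul_one (t : H ⊗[K] A) : X.coactMul (t ⊗ₜ X.oneH) = t := by
  hopf_tensor_induction t with x y
  simp [coactMul, X.mulH_one]

lemma unitConditions (hc : X.CounitConditions)
    (hone : X.comulB (X.oneA ⊗ₜ X.oneH) = (X.oneA ⊗ₜ X.oneH) ⊗ₜ (X.oneA ⊗ₜ X.oneH)) :
    X.UnitConditions := by
  constructor
  · have := map_projA_projA_comulB (X := X) (X.oneA ⊗ₜ X.oneH)
    rw [hone] at this
    simpa [projA, X.counit_oneH] using this.symm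
  · have := map_projH_projA_comulB (X := X) X.oneA X.oneH
    rw [hone, coactMul_one] at this
    simpa [projA, projH, X.counit_oneH, hc.counit_oneA] using this.symm

lemma map_projA_projA_mulBB (x y : (A ⊗[K] H) ⊗[K] (A ⊗[K] H)) :
    map projA projA (X.mulBB (x ⊗ₜ y)) =
      map (X.cross ∘ₗ (tensorTensorTensorComm K A H A H).toLinearMap)
        (X.cross ∘ₗ (tensorTensorTensorComm K A H A H).toLinearMap)
        (tensorTensorTensorComm K (A ⊗[K] H) (A ⊗[K] H) (A ⊗[K] H) (A ⊗[K] H) (x ⊗ₜ y)) := by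
  hopf_tensor_induction x with x₁ x₂
  hopf_tensor_induction y with y₁ y₂
  hopf_tensor_induction x₁ with a h
  hopf_tensor_induction x₂ with a' h'
  hopf_tensor_induction y₁ with b g
  hopf_tensor_induction y₂ with b' g'
  simp [mulBB_tmul, projA_mulB]

lemma map_projH_projA_mulBB (hc : X.CounitConditions) (x y : (A ⊗[K] H) ⊗[K] (A ⊗[K] H)) :
    map projH projA (X.mulBB (x ⊗ₜ y)) =
      map X.mulH (X.cross ∘ₗ (tensorTensorTensorComm K A H A H).toLinearMap)
        (tensorTensorTensorComm K H (A ⊗[K] H) H (A ⊗[K] H)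
          (map projH LinearMap.id x ⊗ₜ map projH LinearMap.id y)) := by
  hopf_tensor_induction x with x₁ x₂
  hopf_tensor_induction y with y₁ y₂
  hopf_tensor_induction x₂ with a' h'
  hopf_tensor_induction y₂ with b' g'
  simp [mulBB_tmul, projA_mulB, projH_mulB hc]

lemma map_projH_comulCoact (a : A) : map projH LinearMap.id (X.comulCoact a) = X.coact a := by
  trans X.coact (TensorProduct.lid K A (map counit LinearMap.id (comul a)))
  · rw [comulCoact]
    simp only [LinearMap.comp_apply]
    hopf_tensor_induction comul (R := K) a with a₁ a₂
    trans TensorProduct.lid K _ (counit (R := K) a₁ ⊗ₜ X.coact a₂)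
    · simp only [map_tmul]
      hopf_tensor_induction X.coact a₂ with n w
      simp [projH, smul_tmul']
    · simp
  · rw [lid_counit_comul]

theorem mulConditions (hc : X.CounitConditions) (hu : X.UnitConditions)
    (hmul : ∀ x y, X.comulB (X.mulB (x ⊗ₜ y)) = X.mulBB (X.comulB x ⊗ₜ X.comulB y)) :
    X.MulConditions := by
  have hAA (x y) := congr(map projA projA $(hmul x y))
  have hHA (x y) := congr(map projH projA $(hmul x y))
  simp only [map_projA_projA_comulB, map_projA_projA_mulBB] at hAA
  simp only [map_projH_projA_mulBB hc] at hHA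
  constructor
  · intro c
    hopf_tensor_induction c with h g
    have := hAA (X.oneA ⊗ₜ h) (X.oneA ⊗ₜ g)
    rw [projA_mulB, X.cross_cocycle, comulB_one_left hu, comulB_one_left hu] at this
    rw [this, comul_tmul]
    hopf_tensor_induction comul (R := K) h with h₁ h₂
    hopf_tensor_induction comul (R := K) g with g₁ g₂
    simp [X.cross_cocycle]
  · intro a b
    have := hHA (a ⊗ₜ X.oneH) (b ⊗ₜ X.oneH)
    rw [mulB_right_one, map_projH_projA_comulB, coactMul_one, comulB_one_right,
      comulB_one_right] at this
    rw [this, ← map_projH_comulCoact a, ← map_projH_comulCoact b]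
    hopf_tensor_induction X.comulCoact a with x z
    hopf_tensor_induction X.comulCoact b with y w
    simp [X.cross_one_one]
  · intro c
    hopf_tensor_induction c with h g
    have := hHA (X.oneA ⊗ₜ h) (X.oneA ⊗ₜ g)
    rw [mulB_one_tmul_one_tmul, comulB_one_left hu, comulB_one_left hu] at this
    trans map projH projA (X.comulB (map X.cocycle X.mulH (comul (h ⊗ₜ[K] g))))
    · hopf_tensor_induction comul (R := K) (h ⊗ₜ[K] g) with x y
      simp [map_projH_projA_comulB]
    · rw [this, comul_tmul]
      hopf_tensor_induction comul (R := K) h with h₁ h₂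
      hopf_tensor_induction comul (R := K) g with g₁ g₂
      simp [X.cross_cocycle, projH, hc.counit_oneA]
  · intro a b
    have := hAA (a ⊗ₜ X.oneH) (b ⊗ₜ X.oneH)
    rw [projA_mulB, X.cross_one_one, comulB_one_right, comulB_one_right] at this
    rw [this]
    hopf_tensor_induction X.comulCoact a with x z
    hopf_tensor_induction X.comulCoact b with y w
    simp [X.cross_one_one]
  · intro h b
    have := hAA (X.oneA ⊗ₜ h) (b ⊗ₜ X.oneH)
    rw [projA_mulB, X.cross_act, comulB_one_right, comulB_one_left hu] at this
    rw [this]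
    hopf_tensor_induction X.comulCoact b with y w
    hopf_tensor_induction comul (R := K) h with h₁ h₂
    simp [X.cross_act, crossOne]
  · intro h b
    have := hHA (X.oneA ⊗ₜ h) (b ⊗ₜ X.oneH)
    rw [mulB_one_left, comulB_one_left hu, comulB_one_right] at this
    trans map projH projA (X.comulB
      (map (X.act ∘ₗ (TensorProduct.mk K H A).flip b) LinearMap.id (comul h)))
    · hopf_tensor_induction comul (R := K) h with x y
      simp [map_projH_projA_comulB]
    · rw [this, ← map_projH_comulCoact b]
      hopf_tensor_induction X.comulCoact b with y w
      hopf_tensor_induction comul (R := K) h with h₁ h₂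
      simp [X.cross_act, projH, hc.counit_oneA]

end CrossedBiproductData

open Coalgebra in
/-- The coalgebra obtained from a monoidal Hom-coalgebra by untwisting its comultiplication. -/
@[reducible] def HomCoalgebraStr.untwist {K C : Type*} [Field K] [AddCommGroup C] [Module K C]
    (D : HomCoalgebraStr K C) : Coalgebra K C where
  comul := map D.str.toLinearMap D.str.toLinearMap ∘ₗ D.comul
  counit := D.counit
  coassoc := by
    ext c
    let q : C →ₗ[K] C := D.str.toLinearMap ∘ₗ D.str.toLinearMap
    have h := congr(map q (map q q) $(D.hom_coassoc c))
    have e (x : C ⊗[K] C) : map q (map q q)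
        (TensorProduct.assoc K C C C (map D.comul D.str.symm.toLinearMap x)) =
        TensorProduct.assoc K C C C ((map D.str.toLinearMap D.str.toLinearMap ∘ₗ D.comul).rTensor C
          (map D.str.toLinearMap D.str.toLinearMap x)) := by
      hopf_tensor_induction x with c₁ c₂
      simp [D.comul_str]
      hopf_tensor_induction D.comul c₁ with x y
      simp [q]
    have e' (x : C ⊗[K] C) : map q (map q q) (map D.str.symm.toLinearMap D.comul x) =
        (map D.str.toLinearMap D.str.toLinearMap ∘ₗ D.comul).lTensor C
          (map D.str.toLinearMap D.str.toLinearMap x) := by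
      hopf_tensor_induction x with c₁ c₂
      simp [D.comul_str]
      hopf_tensor_induction D.comul c₂ with x y
      simp [q]
    rw [e, e'] at h
    exact h.symm
  rTensor_counit_comp_comul := by
    ext c
    apply (TensorProduct.lid K C).injective
    have e (x : C ⊗[K] C) : TensorProduct.lid K C
        (D.counit.rTensor C (map D.str.toLinearMap D.str.toLinearMap x)) =
        D.str (TensorProduct.lid K C (map D.counit LinearMap.id x)) := by
      hopf_tensor_induction x with c₁ c₂
      simp [D.counit_str]
    simp only [LinearMap.comp_apply, e, D.counit_comul_left]
    simp
  lTensor_counit_comp_comul := by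
    ext c
    apply (TensorProduct.rid K C).injective
    have e (x : C ⊗[K] C) : TensorProduct.rid K C
        (D.counit.lTensor C (map D.str.toLinearMap D.str.toLinearMap x)) =
        D.str (TensorProduct.rid K C (map LinearMap.id D.counit x)) := by
      hopf_tensor_induction x with c₁ c₂
      simp [D.counit_str]
    simp only [LinearMap.comp_apply, e, D.counit_comul_right]
    simp

/-- The Hom-coalgebra underlying a Hom-bialgebra. -/
@[reducible] def HomBialgebraStr.toHomCoalgebraStr {K C : Type*} [Field K] [AddCommGroup C]
    [Module K C] (B : HomBialgebraStr K C) : HomCoalgebraStr K C := { B with }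

lemma LinearEquiv.zpow_apply_comm {K V W : Type*} [Field K] [AddCommGroup V] [Module K V]
    [AddCommGroup W] [Module K W] {e : V ≃ₗ[K] V} {e' : W ≃ₗ[K] W} {f : V →ₗ[K] W}
    (h : ∀ x, f (e x) = e' (f x)) (n : ℤ) (x : V) : f ((e ^ n) x) = (e' ^ n) (f x) := by
  induction n generalizing x with
  | zero => simp
  | succ n ih => rw [zpow_add_one, zpow_add_one, LinearEquiv.mul_apply, ih, h, LinearEquiv.mul_apply]
  | pred n ih =>
    rw [zpow_sub_one, zpow_sub_one, LinearEquiv.mul_apply, ih, LinearEquiv.mul_apply]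
    congr 1
    exact (LinearEquiv.eq_symm_apply _).2 (by rw [← h]; congr 1; exact e.apply_symm_apply x)

section Zpow

variable {K V : Type*} [Field K] [AddCommGroup V] [Module K V]

lemma LinearEquiv.zpow_zpow_apply {e : V ≃ₗ[K] V} (i j : ℤ) (x : V) :
    (e ^ i) ((e ^ j) x) = (e ^ (i + j)) x := by
  rw [zpow_add]; rfl

lemma LinearEquiv.zpow_eq_zero_apply {e : V ≃ₗ[K] V} {i : ℤ} (hi : i = 0) (x : V) :
    (e ^ i) x = x := by
  subst hi; simp

lemma LinearEquiv.apply_eq_zpow (e : V ≃ₗ[K] V) (x : V) : e x = (e ^ (1 : ℤ)) x := by simp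

lemma LinearEquiv.symm_apply_eq_zpow (e : V ≃ₗ[K] V) (x : V) : e.symm x = (e ^ (-1 : ℤ)) x := by
  rw [zpow_neg_one]; rfl

end Zpow

section Untwist

variable {K H A : Type*} [Field K] [AddCommGroup H] [Module K H] [AddCommGroup A] [Module K A]
  [Coalgebra K H]

open Coalgebra CrossedBiproductData

/-- The untwisted multiplication of a monoidal Hom-algebra. -/
def HomAlgebraStr.untwistMul (AA : HomAlgebraStr K A) : A ⊗[K] A →ₗ[K] A :=
  AA.str.symm.toLinearMap ∘ₗ TensorProduct.lift AA.mul

/-- The untwisted weak action. -/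
def untwistAct (HB : HomBialgebraStr K H) (AA : HomAlgebraStr K A)
    (act : H →ₗ[K] A →ₗ[K] A) (m : ℤ) : H ⊗[K] A →ₗ[K] A :=
  AA.str.toLinearMap ∘ₗ TensorProduct.lift act ∘ₗ
    map (HB.str ^ (m - 2)).toLinearMap (AA.str ^ (-2 : ℤ)).toLinearMap

/-- The untwisted cocycle. -/
def untwistCocycle (HB : HomBialgebraStr K H) (AA : HomAlgebraStr K A)
    (σ : H →ₗ[K] H →ₗ[K] A) (k : ℤ) : H ⊗[K] H →ₗ[K] A :=
  AA.str.toLinearMap ∘ₗ TensorProduct.lift σ ∘ₗ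
    map (HB.str ^ (k - 1)).toLinearMap (HB.str ^ (k - 1)).toLinearMap

lemma cpMulElem_eq_crossedMul (HB : HomBialgebraStr K H) (AA : HomAlgebraStr K A)
    (act : H →ₗ[K] A →ₗ[K] A) (σ : H →ₗ[K] H →ₗ[K] A) (m k : ℤ)
    (hcomul : ∀ h, comul (R := K) h = map HB.str.toLinearMap HB.str.toLinearMap (HB.comul h))
    (a : A) (h : H) (b : A) (g : H) :
    cpMulElem HB AA act σ m k a h b g = TensorProduct.congr AA.str HB.str
      (crossedMul (crossOf AA.untwistMul (untwistAct HB AA act m) (untwistCocycle HB AA σ k))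
        HB.untwistMul ((a ⊗ₜ h) ⊗ₜ (b ⊗ₜ g))) := by
  simp only [crossedMul, cpMulElem, LinearMap.comp_apply, LinearEquiv.coe_coe, map_tmul,
    tensorTensorTensorComm_tmul, LinearMap.id_apply, comul_tmul, hcomul]
  hopf_tensor_induction HB.comul h with h₁ h₂
  hopf_tensor_induction HB.comul g with g₁ g₂
  simp only [map_tmul, tensorTensorTensorComm_tmul, AlgebraTensorModule.tensorTensorTensorComm_tmul,
    assoc_symm_tmul, crossOf_tmul, LinearEquiv.coe_coe, LinearMap.id_apply, hcomul, HB.comul_str]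
  hopf_tensor_induction HB.comul h₁ with x y
  have hα (n : ℤ) (z : H) : (HB.str ^ n) (HB.str z) = (HB.str ^ (n + 1)) z := by
    rw [zpow_add_one]; rfl
  simp [HomAlgebraStr.untwistMul, untwistAct, untwistCocycle, ← AA.str_mul, ← HB.str_mul, hα]
  ring_nf

variable [Coalgebra K A]

/-- `X` is obtained from the given monoidal Hom-structures by removing all the twists. -/
structure IsUntwisting (HB : HomBialgebraStr K H) (AA : HomAlgebraStr K A)
    (AC : HomCoalgebraStr K A) (act : H →ₗ[K] A →ₗ[K] A) (coact : A →ₗ[K] H ⊗[K] A)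
    (σ : H →ₗ[K] H →ₗ[K] A) (m k : ℤ) (X : CrossedBiproductData K H A) : Prop where
  str_eq : AC.str = AA.str
  comulH_eq : ∀ h, HB.comul h =
    map (HB.str ^ (-1 : ℤ)).toLinearMap (HB.str ^ (-1 : ℤ)).toLinearMap (comul h)
  comulA_eq : ∀ a, AC.comul a =
    map (AA.str ^ (-1 : ℤ)).toLinearMap (AA.str ^ (-1 : ℤ)).toLinearMap (comul a)
  counitH_eq : ∀ h, HB.counit h = counit (R := K) h
  counitA_eq : ∀ a, AC.counit a = counit (R := K) a
  mulH_eq : ∀ h g, HB.mul h g = (HB.str ^ (1 : ℤ)) (X.mulH (h ⊗ₜ g))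
  mulA_eq : ∀ a b, AA.mul a b = (AA.str ^ (1 : ℤ)) (X.mulA (a ⊗ₜ b))
  oneH_eq : HB.one = X.oneH
  oneA_eq : AA.one = X.oneA
  act_eq : ∀ h b, act h b = (AA.str ^ (1 : ℤ)) (X.act ((HB.str ^ (-m)) h ⊗ₜ b))
  cocycle_eq : ∀ h g, σ h g = X.cocycle ((HB.str ^ (-k)) h ⊗ₜ (HB.str ^ (-k)) g)
  coact_eq : ∀ a, coact a =
    map (HB.str ^ (-m - 1)).toLinearMap (AA.str ^ (-1 : ℤ)).toLinearMap (X.coact a)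
  comulH_zpow : ∀ (i : ℤ) h, comul (R := K) ((HB.str ^ i) h) =
    map (HB.str ^ i).toLinearMap (HB.str ^ i).toLinearMap (comul h)
  comulA_zpow : ∀ (i : ℤ) a, comul (R := K) ((AA.str ^ i) a) =
    map (AA.str ^ i).toLinearMap (AA.str ^ i).toLinearMap (comul a)
  counitH_zpow : ∀ (i : ℤ) h, counit (R := K) ((HB.str ^ i) h) = counit (R := K) h
  counitA_zpow : ∀ (i : ℤ) a, counit (R := K) ((AA.str ^ i) a) = counit (R := K) a
  mulH_zpow : ∀ (i : ℤ) h g, X.mulH ((HB.str ^ i) h ⊗ₜ (HB.str ^ i) g) =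
    (HB.str ^ i) (X.mulH (h ⊗ₜ g))
  mulA_zpow : ∀ (i : ℤ) a b, X.mulA ((AA.str ^ i) a ⊗ₜ (AA.str ^ i) b) =
    (AA.str ^ i) (X.mulA (a ⊗ₜ b))
  act_zpow : ∀ (i : ℤ) h b, X.act ((HB.str ^ i) h ⊗ₜ (AA.str ^ i) b) =
    (AA.str ^ i) (X.act (h ⊗ₜ b))
  cocycle_zpow : ∀ (i : ℤ) h g, X.cocycle ((HB.str ^ i) h ⊗ₜ (HB.str ^ i) g) =
    (AA.str ^ i) (X.cocycle (h ⊗ₜ g))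
  coact_zpow : ∀ (i : ℤ) a, X.coact ((AA.str ^ i) a) =
    map (HB.str ^ i).toLinearMap (AA.str ^ i).toLinearMap (X.coact a)
  zpow_oneA : ∀ i : ℤ, (AA.str ^ i) X.oneA = X.oneA
  zpow_oneH : ∀ i : ℤ, (HB.str ^ i) X.oneH = X.oneH

end Untwist

section Existence

variable {K H A : Type*} [Field K] [AddCommGroup H] [Module K H] [AddCommGroup A] [Module K A]

lemma LinearEquiv.map_zpow_of_map_tmul {V V' W : Type*} [AddCommGroup V] [Module K V]
    [AddCommGroup V'] [Module K V'] [AddCommGroup W] [Module K W] {e : V ≃ₗ[K] V}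
    {e' : V' ≃ₗ[K] V'} {d : W ≃ₗ[K] W} {f : V ⊗[K] V' →ₗ[K] W}
    (h : ∀ x y, f (e x ⊗ₜ e' y) = d (f (x ⊗ₜ y))) (n : ℤ) (x : V) (y : V') :
    f ((e ^ n) x ⊗ₜ (e' ^ n) y) = (d ^ n) (f (x ⊗ₜ y)) := by
  have h' (t : V ⊗[K] V') : f (TensorProduct.congr e e' t) = d (f t) := by
    hopf_tensor_induction t with x y
    simp [h]
  rw [← LinearEquiv.zpow_apply_comm h' n (x ⊗ₜ y), TensorProduct.congr_zpow, congr_tmul]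

lemma LinearEquiv.zpow_comm_map {V V' W : Type*} [AddCommGroup V] [Module K V]
    [AddCommGroup V'] [Module K V'] [AddCommGroup W] [Module K W] {e : V ≃ₗ[K] V}
    {e' : V' ≃ₗ[K] V'} {d : W ≃ₗ[K] W} {f : W →ₗ[K] V ⊗[K] V'}
    (h : ∀ x, f (d x) = map e.toLinearMap e'.toLinearMap (f x)) (n : ℤ) (x : W) :
    f ((d ^ n) x) = map (e ^ n).toLinearMap (e' ^ n).toLinearMap (f x) := by
  have h' (x : W) : f (d x) = TensorProduct.congr e e' (f x) := h x
  rw [LinearEquiv.zpow_apply_comm h' n x, TensorProduct.congr_zpow]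
  rfl

lemma LinearEquiv.map_zpow_map_zpow_cancel {V V' : Type*} [AddCommGroup V] [Module K V]
    [AddCommGroup V'] [Module K V'] {e : V ≃ₗ[K] V} {e' : V' ≃ₗ[K] V'} {i i' j j' : ℤ}
    (hi : i + i' = 0) (hj : j + j' = 0) (t : V ⊗[K] V') :
    map (e ^ i).toLinearMap (e' ^ j).toLinearMap
      (map (e ^ i').toLinearMap (e' ^ j').toLinearMap t) = t := by
  induction t using TensorProduct.induction_on with
  | zero => simp
  | add x y hx hy => rw [map_add, map_add, hx, hy]
  | tmul x y =>
    simp only [map_tmul, LinearEquiv.coe_coe, zpow_zpow_apply, zpow_eq_zero_apply hi,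
      zpow_eq_zero_apply hj]

lemma LinearEquiv.map_zpow_injective {V V' : Type*} [AddCommGroup V] [Module K V]
    [AddCommGroup V'] [Module K V'] {e : V ≃ₗ[K] V} {e' : V' ≃ₗ[K] V'} (i j : ℤ) :
    Function.Injective (map (e ^ i).toLinearMap (e' ^ j).toLinearMap) :=
  Function.LeftInverse.injective
    (map_zpow_map_zpow_cancel (neg_add_cancel i) (neg_add_cancel j))

lemma HomAlgebraStr.zpow_one (AA : HomAlgebraStr K A) (n : ℤ) : (AA.str ^ n) AA.one = AA.one := by
  have := LinearEquiv.zpow_apply_comm (e := (1 : K ≃ₗ[K] K)) (e' := AA.str)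
    (f := LinearMap.toSpanSingleton K A AA.one) (by simp [AA.str_one]) n 1
  simpa using this.symm

variable [Coalgebra K H] [Coalgebra K A]

open Coalgebra CrossedBiproductData

theorem exists_isUntwisting (HB : HomBialgebraStr K H) (AA : HomAlgebraStr K A)
    (AC : HomCoalgebraStr K A) (hstr : AA.str = AC.str)
    (hcomulH : ∀ h, comul (R := K) h = map HB.str.toLinearMap HB.str.toLinearMap (HB.comul h))
    (hcomulA : ∀ a, comul (R := K) a = map AC.str.toLinearMap AC.str.toLinearMap (AC.comul a))
    (hcounitH : ∀ h, counit (R := K) h = HB.counit h)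
    (hcounitA : ∀ a, counit (R := K) a = AC.counit a)
    (act : H →ₗ[K] A →ₗ[K] A) (hact : IsWeakModuleAlgebra HB AA act)
    (coact : A →ₗ[K] H ⊗[K] A) (hcc : IsComoduleCoalgebra HB AC coact)
    (σ : H →ₗ[K] H →ₗ[K] A) (m k : ℤ)
    (M : HomAlgebraStr K (A ⊗[K] H))
    (hMmul : ∀ (a : A) (h : H) (b : A) (g : H),
      M.mul (a ⊗ₜ[K] h) (b ⊗ₜ[K] g) = cpMulElem HB AA act σ m k a h b g)
    (hMone : M.one = AA.one ⊗ₜ[K] HB.one)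
    (hMstr : M.str = TensorProduct.congr AA.str HB.str) :
    ∃ X : CrossedBiproductData K H A, IsUntwisting HB AA AC act coact σ m k X ∧
      ∀ x y, M.mul x y = TensorProduct.congr AA.str HB.str (X.mulB (x ⊗ₜ y)) := by
  set mulH := HB.untwistMul with hmulH
  set mulA := AA.untwistMul with hmulA
  set act' := untwistAct HB AA act m with hact'
  set coc' := untwistCocycle HB AA σ k with hcoc'
  set cr := crossOf mulA act' coc' with hcr
  set S := TensorProduct.congr AA.str HB.str with hS
  have hM (x y) : M.mul x y = S (crossedMul cr mulH (x ⊗ₜ y)) := by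
    suffices TensorProduct.lift M.mul = S.toLinearMap ∘ₗ crossedMul cr mulH from
      congr($this (x ⊗ₜ y))
    ext a h b g
    simp only [AlgebraTensorModule.curry_apply, LinearMap.restrictScalars_self, curry_apply,
      lift.tmul, LinearMap.comp_apply, LinearEquiv.coe_coe]
    rw [hMmul, cpMulElem_eq_crossedMul HB AA act σ m k hcomulH]
  have hcmulH (c) : counit (R := K) (mulH c) = counit (R := K) c := by
    hopf_tensor_induction c with h g
    have := HB.counit_str (HB.str.symm (HB.mul h g))
    simp [hmulH, HomAlgebraStr.untwistMul, hcounitH, ← this, HB.counit_mul, mul_comm]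
  have mulA_one (a) : mulA (a ⊗ₜ AA.one) = a := by
    simp [hmulA, HomAlgebraStr.untwistMul, AA.mul_one]
  have one_mulA (a) : mulA (AA.one ⊗ₜ a) = a := by
    simp [hmulA, HomAlgebraStr.untwistMul, AA.one_mul]
  have mulH_one (a) : mulH (a ⊗ₜ HB.one) = a := by
    simp [hmulH, HomAlgebraStr.untwistMul, HB.mul_one]
  have one_mulH (a) : mulH (HB.one ⊗ₜ a) = a := by
    simp [hmulH, HomAlgebraStr.untwistMul, HB.one_mul]
  have comul_oneH : comul (R := K) HB.one = HB.one ⊗ₜ[K] HB.one := by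
    simp [hcomulH, HB.comul_one, HB.str_one]
  have counitH_zpow (i : ℤ) (h : H) : HB.counit ((HB.str ^ i) h) = HB.counit h := by
    rw [LinearEquiv.zpow_apply_comm (e' := (1 : K ≃ₗ[K] K)) HB.counit_str]; simp
  have act_one (h) : act' (h ⊗ₜ AA.one) = counit (R := K) h • AA.one := by
    simp only [hact', untwistAct, LinearMap.comp_apply, map_tmul, LinearEquiv.coe_coe,
      AA.zpow_one, lift.tmul, hact.act_one, counitH_zpow, hcounitH, map_smul, AA.str_one]
  have cr_left (b g) : cr ((AA.one ⊗ₜ b) ⊗ₜ (HB.one ⊗ₜ g)) = counit (R := K) g • b := by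
    have := M.one_mul (b ⊗ₜ g)
    rw [hM, hMone, hMstr] at this
    rw [← projA_crossedMul hcmulH, S.injective this]
    simp [projA]
  have cr_right (a h) : cr ((a ⊗ₜ AA.one) ⊗ₜ (h ⊗ₜ HB.one)) = counit (R := K) h • a := by
    have := M.mul_one (a ⊗ₜ h)
    rw [hM, hMone, hMstr] at this
    rw [← projA_crossedMul hcmulH, S.injective this]
    simp [projA]
  have cr_cocycle (c) : cr ((AA.one ⊗ₜ AA.one) ⊗ₜ c) = coc' c := by
    hopf_tensor_induction c with h g
    rw [hcr, crossOf_tmul, one_mulA]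
    conv_rhs => rw [← lid_counit_comul (K := K) h]
    hopf_tensor_induction comul (R := K) h with x y
    simp [act_one, ← smul_tmul', one_mulA]
  have coc_one (g) : coc' (HB.one ⊗ₜ g) = counit (R := K) g • AA.one := by
    rw [← cr_cocycle, cr_left]
  have coc_one' (h) : coc' (h ⊗ₜ HB.one) = counit (R := K) h • AA.one := by
    rw [← cr_cocycle, cr_right]
  have counit_oneH : counit (R := K) HB.one = 1 := by rw [hcounitH, HB.counit_one]
  have cr_act (h b) : cr ((AA.one ⊗ₜ b) ⊗ₜ (h ⊗ₜ HB.one)) = act' (h ⊗ₜ b) := by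
    rw [hcr, crossOf_tmul, one_mulA]
    conv_rhs => rw [← rid_counit_comul (K := K) h]
    hopf_tensor_induction comul (R := K) h with x y
    simp [coc_one', mulA_one, ← smul_tmul']
  have one_act (b) : act' (HB.one ⊗ₜ b) = b := by
    rw [← cr_act, cr_left, counit_oneH, one_smul]
  have mulH_str (h g) : mulH (HB.str h ⊗ₜ HB.str g) = HB.str (mulH (h ⊗ₜ g)) := by
    simp [hmulH, HomAlgebraStr.untwistMul, ← HB.str_mul]
  have mulA_str (h g) : mulA (AA.str h ⊗ₜ AA.str g) = AA.str (mulA (h ⊗ₜ g)) := by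
    simp [hmulA, HomAlgebraStr.untwistMul, ← AA.str_mul]
  have comulH_str (h) : comul (R := K) (HB.str h) =
      map HB.str.toLinearMap HB.str.toLinearMap (comul h) := by
    rw [hcomulH, hcomulH, HB.comul_str]
  have comulA_str (a) : comul (R := K) (AA.str a) =
      map AA.str.toLinearMap AA.str.toLinearMap (comul a) := by
    rw [hstr, hcomulA, hcomulA, AC.comul_str]
  have projA_S (z) : projA (S z) = AA.str (projA (K := K) z) := by
    hopf_tensor_induction z with a h
    simp [S, projA, hcounitH, HB.counit_str]
  have cr_str (a b h g) : cr ((AA.str a ⊗ₜ AA.str b) ⊗ₜ (HB.str h ⊗ₜ HB.str g)) =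
      AA.str (cr ((a ⊗ₜ b) ⊗ₜ (h ⊗ₜ g))) := by
    have := M.str_mul (a ⊗ₜ h) (b ⊗ₜ g)
    rw [hM, hM, hMstr] at this
    have := S.injective this
    rw [← projA_crossedMul hcmulH, ← projA_crossedMul hcmulH, ← projA_S, this]
    simp [S]
  have act_str (h b) : act' (HB.str h ⊗ₜ AA.str b) = AA.str (act' (h ⊗ₜ b)) := by
    have := cr_str AA.one b h HB.one
    rwa [AA.str_one, HB.str_one, cr_act, cr_act] at this
  have coc_str (h g) : coc' (HB.str h ⊗ₜ HB.str g) = AA.str (coc' (h ⊗ₜ g)) := by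
    have := cr_str AA.one AA.one h g
    rwa [AA.str_one, cr_cocycle, cr_cocycle] at this
  have coact_zpow (i : ℤ) (a) : coact ((AA.str ^ i) a) =
      map (HB.str ^ i).toLinearMap (AA.str ^ i).toLinearMap (coact a) :=
    LinearEquiv.zpow_comm_map (by rw [hstr]; exact hcc.coact_str) i a
  have act_zpow := LinearEquiv.map_zpow_of_map_tmul act_str
  have coc_zpow := LinearEquiv.map_zpow_of_map_tmul coc_str
  refine ⟨⟨mulH, HB.one, mulA, AA.one, act', coc',
    map (HB.str ^ (m + 1)).toLinearMap AA.str.toLinearMap ∘ₗ coact, cr, ?_, hcmulH, comul_oneH,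
    counit_oneH, mulH_one, one_mulH, ?_, ?_, ?_, cr_act, cr_cocycle, ?_, fun a b h g ↦ crossOf_tmul ..⟩,
    ⟨hstr.symm, ?_, ?_, fun h ↦ (hcounitH h).symm, fun h ↦ (hcounitA h).symm, ?_, ?_, rfl, rfl,
      ?_, ?_, ?_, LinearEquiv.zpow_comm_map comulH_str,
      LinearEquiv.zpow_comm_map comulA_str, ?_, ?_, LinearEquiv.map_zpow_of_map_tmul mulH_str,
      LinearEquiv.map_zpow_of_map_tmul mulA_str,
      act_zpow, coc_zpow, ?_,
      AA.zpow_one, HB.zpow_one⟩, hM⟩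
  · intro c
    hopf_tensor_induction c with h g
    have e : comul (R := K) (mulH (h ⊗ₜ g)) = HB.comul (HB.mul h g) := by
      rw [hcomulH, ← HB.comul_str]
      simp [hmulH, HomAlgebraStr.untwistMul]
    rw [e, HB.comul_mul, comul_tmul, hcomulH, hcomulH, tensorSquareMul, curry_apply]
    hopf_tensor_induction HB.comul h with x y
    hopf_tensor_induction HB.comul g with z w
    simp [hmulH, HomAlgebraStr.untwistMul, ← HB.str_mul]
  · intro a
    have h := congr(map (HB.str ^ (m + 2)).toLinearMap (map (HB.str ^ (m + 2)).toLinearMap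
      (AA.str ^ (2 : ℤ)).toLinearMap) $(hcc.comodule_coassoc a))
    simp only [LinearMap.comp_apply]
    have e (t : H ⊗[K] A) : map (HB.str ^ (m + 2)).toLinearMap (map (HB.str ^ (m + 2)).toLinearMap
        (AA.str ^ (2 : ℤ)).toLinearMap)
          (TensorProduct.assoc K H H A (map HB.comul AC.str.symm.toLinearMap t)) =
        TensorProduct.assoc K H H A (map comul LinearMap.id
          (map (HB.str ^ (m + 1)).toLinearMap AA.str.toLinearMap t)) := by
      hopf_tensor_induction t with n w
      simp only [map_tmul, LinearEquiv.coe_coe, LinearEquiv.zpow_comm_map comulH_str, hcomulH n,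
        LinearMap.id_apply, ← hstr]
      hopf_tensor_induction HB.comul n with x y
      simp only [map_tmul, assoc_tmul, LinearEquiv.coe_coe, LinearEquiv.symm_apply_eq_zpow,
        LinearEquiv.zpow_zpow_apply]
      rw [LinearEquiv.apply_eq_zpow HB.str, LinearEquiv.apply_eq_zpow HB.str,
        LinearEquiv.apply_eq_zpow AA.str, LinearEquiv.zpow_zpow_apply, LinearEquiv.zpow_zpow_apply]
      ring_nf
    have e' (t : H ⊗[K] A) : map (HB.str ^ (m + 2)).toLinearMap (map (HB.str ^ (m + 2)).toLinearMap
        (AA.str ^ (2 : ℤ)).toLinearMap) (map HB.str.symm.toLinearMap coact t) =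
        map LinearMap.id (map (HB.str ^ (m + 1)).toLinearMap AA.str.toLinearMap ∘ₗ coact)
          (map (HB.str ^ (m + 1)).toLinearMap AA.str.toLinearMap t) := by
      hopf_tensor_induction t with n w
      simp only [map_tmul, LinearEquiv.coe_coe, LinearMap.comp_apply, LinearMap.id_apply]
      rw [LinearEquiv.apply_eq_zpow AA.str, coact_zpow]
      hopf_tensor_induction coact w with x y
      simp only [map_tmul, LinearEquiv.coe_coe, LinearEquiv.symm_apply_eq_zpow,
        LinearEquiv.zpow_zpow_apply]
      rw [LinearEquiv.apply_eq_zpow AA.str, LinearEquiv.zpow_zpow_apply]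
      ring_nf
    rw [← e, ← e', h]
  · intro a
    have h := congr(AA.str $(hcc.counit_coact a))
    rw [← hstr, LinearEquiv.apply_symm_apply] at h
    conv_rhs => rw [← h]
    simp only [LinearMap.comp_apply]
    hopf_tensor_induction coact a with n w
    simp [hcounitH, counitH_zpow]
  · intro t
    hopf_tensor_induction t with a b
    simp [hcr, crossOf_tmul, comul_oneH, one_act, coc_one, mulA_one, counit_oneH]
  · intro a g
    simp [hcr, crossOf_tmul, comul_oneH, one_act, coc_one, mulA_one]
  · intro h
    rw [hcomulH]
    exact (LinearEquiv.map_zpow_map_zpow_cancel (i' := 1) (j' := 1) rfl rfl _).symm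
  · intro a
    rw [hcomulA, hstr]
    exact (LinearEquiv.map_zpow_map_zpow_cancel (i' := 1) (j' := 1) rfl rfl _).symm
  · intro h g
    simp [hmulH, HomAlgebraStr.untwistMul]
  · intro a b
    simp [hmulA, HomAlgebraStr.untwistMul]
  · intro h b
    have := act_zpow 2 ((HB.str ^ (-m)) h) b
    rw [show (2 : ℤ) = 1 + 1 from rfl, ← LinearEquiv.zpow_zpow_apply (e := AA.str) 1 1 (act' _)] at this
    simp only [zpow_one] at this ⊢
    rw [← AA.str.injective this]
    simp only [LinearMap.comp_apply, map_tmul, LinearEquiv.coe_coe, lift.tmul,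
      LinearEquiv.zpow_zpow_apply]
    rw [LinearEquiv.zpow_eq_zero_apply (by ring), LinearEquiv.zpow_eq_zero_apply (by ring)]
  · intro h g
    have := coc_str ((HB.str ^ (-k)) h) ((HB.str ^ (-k)) g)
    rw [← AA.str.injective this]
    simp only [LinearMap.comp_apply, map_tmul, LinearEquiv.coe_coe, lift.tmul,
      LinearEquiv.apply_eq_zpow HB.str, LinearEquiv.zpow_zpow_apply]
    rw [LinearEquiv.zpow_eq_zero_apply (by ring), LinearEquiv.zpow_eq_zero_apply (by ring)]
  · intro a
    exact (LinearEquiv.map_zpow_map_zpow_cancel (j' := 1) (by ring) rfl _).symm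
  · intro i h
    rw [hcounitH, hcounitH, counitH_zpow]
  · intro i a
    rw [hcounitA, hcounitA, hstr,
      LinearEquiv.zpow_apply_comm (e' := (1 : K ≃ₗ[K] K)) AC.counit_str]
    simp
  · intro i a
    simp only [LinearMap.comp_apply, coact_zpow]
    hopf_tensor_induction coact a with n w
    simp only [map_tmul, LinearEquiv.coe_coe, LinearEquiv.zpow_zpow_apply,
      LinearEquiv.apply_eq_zpow AA.str, add_comm]

end Existence

section Transfer

variable {K H A : Type*} [Field K] [AddCommGroup H] [Module K H] [AddCommGroup A] [Module K A]
  [Coalgebra K H] [Coalgebra K A] {HB : HomBialgebraStr K H} {AA : HomAlgebraStr K A}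
  {AC : HomCoalgebraStr K A} {act : H →ₗ[K] A →ₗ[K] A} {coact : A →ₗ[K] H ⊗[K] A}
  {σ : H →ₗ[K] H →ₗ[K] A} {m k : ℤ} {X : CrossedBiproductData K H A}

open Coalgebra CrossedBiproductData LinearEquiv

namespace IsUntwisting

lemma one_mulA (hX : IsUntwisting HB AA AC act coact σ m k X) (a : A) :
    X.mulA (X.oneA ⊗ₜ a) = a := by
  have := hX.mulA_eq X.oneA a
  rw [← hX.oneA_eq, AA.one_mul, zpow_one] at this
  rw [← hX.oneA_eq]
  exact (AA.str.injective this).symm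

lemma cross_oneA (hX : IsUntwisting HB AA AC act coact σ m k X) (a : A) (h g : H) :
    X.cross ((a ⊗ₜ X.oneA) ⊗ₜ (h ⊗ₜ g)) = X.mulA (a ⊗ₜ X.cocycle (h ⊗ₜ g)) := by
  rw [X.cross_eq, ← X.cross_cocycle, X.cross_eq, hX.one_mulA]

lemma crossOne_tmul (hX : IsUntwisting HB AA AC act coact σ m k X) (b : A) (h g : H) :
    X.crossOne (h ⊗ₜ (b ⊗ₜ g)) = X.mulA (map X.act X.cocycle
    (TensorProduct.tensorTensorTensorComm K H H A H (Coalgebra.comul h ⊗ₜ (b ⊗ₜ g)))) := by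
  simp only [crossOne, LinearMap.comp_apply, map_tmul, mk_apply, LinearMap.id_apply,
    LinearEquiv.coe_coe, tensorTensorTensorComm_tmul, X.cross_eq, hX.one_mulA]

lemma counitConditions_iff (hX : IsUntwisting HB AA AC act coact σ m k X) :
    X.CounitConditions ↔ CondA1 AA AC ∧ CondA2 HB AC act ∧
      ∀ h g, AC.counit (σ h g) = HB.counit h * HB.counit g := by
  simp only [CondA1, CondA2, hX.counitA_eq, hX.counitH_eq, hX.mulA_eq, hX.act_eq, hX.cocycle_eq,
    hX.oneA_eq, hX.counitA_zpow]
  constructor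
  · intro h
    refine ⟨⟨h.counit_mulA, h.counit_oneA⟩, fun x a ↦ ?_, fun x y ↦ ?_⟩
    · rw [h.counit_act, hX.counitH_zpow]
    · rw [h.counit_cocycle, hX.counitH_zpow, hX.counitH_zpow]
  · rintro ⟨⟨h₁, h₂⟩, h₃, h₄⟩
    refine ⟨h₁, h₂, fun x a ↦ ?_, fun x y ↦ ?_⟩
    · simpa [zpow_zpow_apply, hX.counitH_zpow] using h₃ ((HB.str ^ m) x) a
    · simpa [zpow_zpow_apply, hX.counitH_zpow] using h₄ ((HB.str ^ k) x) ((HB.str ^ k) y)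

lemma unitConditions_iff (hX : IsUntwisting HB AA AC act coact σ m k X) :
    X.UnitConditions ↔ CondA4 AA AC ∧ coact AA.one = HB.one ⊗ₜ[K] AA.one := by
  have h₁ : X.oneA ⊗ₜ[K] X.oneA = map (AA.str ^ (-1 : ℤ)).toLinearMap
      (AA.str ^ (-1 : ℤ)).toLinearMap (X.oneA ⊗ₜ X.oneA) := by
    simp only [map_tmul, LinearEquiv.coe_coe, hX.zpow_oneA]
  have h₂ : X.oneH ⊗ₜ[K] X.oneA = map (HB.str ^ (-m - 1)).toLinearMap
      (AA.str ^ (-1 : ℤ)).toLinearMap (X.oneH ⊗ₜ X.oneA) := by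
    simp only [map_tmul, LinearEquiv.coe_coe, hX.zpow_oneA, hX.zpow_oneH]
  rw [CondA4, hX.oneA_eq, hX.oneH_eq, hX.comulA_eq, hX.coact_eq, h₁, h₂,
    (map_zpow_injective _ _).eq_iff, (map_zpow_injective _ _).eq_iff]
  exact ⟨fun h ↦ ⟨h.1, h.2⟩, fun h ↦ ⟨h.1, h.2⟩⟩

lemma comul_cocycle_iff (hX : IsUntwisting HB AA AC act coact σ m k X) :
    (∀ c, comul (R := K) (X.cocycle c) = map X.cocycle X.cocycle (comul c)) ↔
      ∀ h g, AC.comul (σ h g) = TensorProduct.map (TensorProduct.lift σ) (TensorProduct.lift σ)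
          (TensorProduct.tensorTensorTensorComm K H H H H (HB.comul h ⊗ₜ[K] HB.comul g)) := by
  have e (h g : H) : TensorProduct.map (TensorProduct.lift σ) (TensorProduct.lift σ)
      (TensorProduct.tensorTensorTensorComm K H H H H (HB.comul h ⊗ₜ[K] HB.comul g)) =
      map (AA.str ^ (-1 : ℤ)).toLinearMap (AA.str ^ (-1 : ℤ)).toLinearMap
        (map X.cocycle X.cocycle (comul ((HB.str ^ (-k)) h ⊗ₜ (HB.str ^ (-k)) g))) := by
    simp only [comul_tmul, hX.comulH_eq, hX.comulH_zpow]
    hopf_tensor_induction comul (R := K) h with h₁ h₂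
    hopf_tensor_induction comul (R := K) g with g₁ g₂
    simp only [map_tmul, LinearEquiv.coe_coe, tensorTensorTensorComm_tmul,
      AlgebraTensorModule.tensorTensorTensorComm_tmul, lift.tmul, hX.cocycle_eq,
      ← hX.cocycle_zpow, zpow_zpow_apply, add_comm]
  simp only [e, hX.cocycle_eq, hX.comulA_eq, (map_zpow_injective _ _).eq_iff]
  refine ⟨fun h _ _ ↦ h _, fun h c ↦ ?_⟩
  hopf_tensor_induction c with x y
  simpa [zpow_zpow_apply] using h ((HB.str ^ k) x) ((HB.str ^ k) y)

lemma coact_mulA_iff (hX : IsUntwisting HB AA AC act coact σ m k X) :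
    (∀ a b, X.coact (X.mulA (a ⊗ₜ b)) =
      map X.mulH X.mulA (tensorTensorTensorComm K H A H A (X.coact a ⊗ₜ X.coact b))) ↔
    ∀ a b, coact (AA.mul a b) = map (TensorProduct.lift HB.mul) (TensorProduct.lift AA.mul)
          (TensorProduct.tensorTensorTensorComm K H A H A (coact a ⊗ₜ[K] coact b)) := by
  refine forall₂_congr fun a b ↦ ?_
  have e : map (TensorProduct.lift HB.mul) (TensorProduct.lift AA.mul)
      (TensorProduct.tensorTensorTensorComm K H A H A (coact a ⊗ₜ[K] coact b)) =
      map (HB.str ^ (-m)).toLinearMap (AA.str ^ (0 : ℤ)).toLinearMap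
        (map X.mulH X.mulA (tensorTensorTensorComm K H A H A (X.coact a ⊗ₜ X.coact b))) := by
    simp only [hX.coact_eq]
    hopf_tensor_induction X.coact a with x y
    hopf_tensor_induction X.coact b with z w
    simp only [map_tmul, LinearEquiv.coe_coe, tensorTensorTensorComm_tmul, lift.tmul, hX.mulA_eq,
      hX.mulH_eq, ← hX.mulA_zpow, ← hX.mulH_zpow, zpow_zpow_apply]
    ring_nf
  have e' : coact (AA.mul a b) = map (HB.str ^ (-m)).toLinearMap (AA.str ^ (0 : ℤ)).toLinearMap
      (X.coact (X.mulA (a ⊗ₜ b))) := by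
    rw [hX.coact_eq, hX.mulA_eq, hX.coact_zpow]
    hopf_tensor_induction X.coact (X.mulA (a ⊗ₜ b)) with x y
    simp only [map_tmul, LinearEquiv.coe_coe, zpow_zpow_apply]
    ring_nf
  rw [e, e', (map_zpow_injective _ _).eq_iff]

lemma coact_cocycle_iff (hX : IsUntwisting HB AA AC act coact σ m k X) :
    (∀ c, X.coactMul (map (X.coact ∘ₗ X.cocycle) X.mulH (comul c)) =
      map X.mulH X.cocycle (comul c)) ↔ CondA6 HB coact σ m k := by
  have e (h g : H) : coactMulAux HB (m-1) (LinearMap.id : A →ₗ[K] A)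
      (TensorProduct.map
        (coact ∘ₗ TensorProduct.lift σ ∘ₗ
          TensorProduct.map (HB.str ^ (k+2)).toLinearMap (HB.str ^ (k+2)).toLinearMap)
        ((HB.str ^ (-1 : ℤ)).toLinearMap ∘ₗ TensorProduct.lift HB.mul)
        (TensorProduct.tensorTensorTensorComm K H H H H (HB.comul h ⊗ₜ[K] HB.comul g))) =
      X.coactMul (map (X.coact ∘ₗ X.cocycle) X.mulH (comul (h ⊗ₜ g))) := by
    rw [hX.comulH_eq, hX.comulH_eq, comul_tmul]
    hopf_tensor_induction comul (R := K) h with h₁ h₂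
    hopf_tensor_induction comul (R := K) g with g₁ g₂
    simp only [map_tmul, LinearEquiv.coe_coe, tensorTensorTensorComm_tmul, LinearMap.comp_apply,
      AlgebraTensorModule.tensorTensorTensorComm_tmul, lift.tmul, hX.cocycle_eq, zpow_zpow_apply,
      hX.coact_eq, hX.mulH_eq, hX.mulH_zpow]
    rw [show -k + (k + 2 + -1) = 1 by ring, hX.cocycle_zpow, hX.coact_zpow]
    hopf_tensor_induction X.coact (X.cocycle (h₁ ⊗ₜ g₁)) with x y
    simp only [coactMul, coactMulAux, map_tmul, LinearEquiv.coe_coe, LinearMap.comp_apply,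
      assoc_tmul, assoc_symm_tmul, comm_tmul, LinearMap.id_apply, rightComm_tmul, lift.tmul,
      hX.mulH_eq, ← hX.mulH_zpow, zpow_zpow_apply]
    simp (disch := omega) only [zpow_eq_zero_apply]
  have e' (h g : H) : TensorProduct.map (TensorProduct.lift HB.mul)
      (TensorProduct.lift σ ∘ₗ
        TensorProduct.map (HB.str ^ (k+1)).toLinearMap (HB.str ^ (k+1)).toLinearMap)
      (TensorProduct.tensorTensorTensorComm K H H H H (HB.comul h ⊗ₜ[K] HB.comul g)) =
      map X.mulH X.cocycle (comul (h ⊗ₜ g)) := by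
    rw [hX.comulH_eq, hX.comulH_eq, comul_tmul]
    hopf_tensor_induction comul (R := K) h with h₁ h₂
    hopf_tensor_induction comul (R := K) g with g₁ g₂
    simp only [map_tmul, LinearEquiv.coe_coe, tensorTensorTensorComm_tmul, LinearMap.comp_apply,
      AlgebraTensorModule.tensorTensorTensorComm_tmul, lift.tmul, hX.cocycle_eq, zpow_zpow_apply,
      hX.mulH_eq, ← hX.mulH_zpow]
    simp (disch := omega) only [zpow_eq_zero_apply]
  simp only [CondA6, e, e']
  refine ⟨fun h _ _ ↦ h _, fun h c ↦ ?_⟩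
  hopf_tensor_induction c with x y
  exact h x y

lemma comul_mulA_iff (hX : IsUntwisting HB AA AC act coact σ m k X) :
    (∀ a b, comul (R := K) (X.mulA (a ⊗ₜ b)) =
      map (X.cross ∘ₗ (tensorTensorTensorComm K A H A H).toLinearMap) X.mulA
        (tensorTensorTensorComm K (A ⊗[K] H) A (A ⊗[K] H) A
          (X.comulCoact a ⊗ₜ X.comulCoact b))) ↔ CondA7 HB AA AC act coact σ m k := by
  refine forall₂_congr fun a b ↦ ?_
  have e : AC.comul (AA.mul a b) = comul (X.mulA (a ⊗ₜ b)) := by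
    rw [hX.comulA_eq, hX.mulA_eq, hX.comulA_zpow, map_zpow_map_zpow_cancel rfl rfl]
  rw [e]
  refine Eq.congr_right ?_
  simp only [hX.comulA_eq, comulCoact, LinearMap.comp_apply]
  hopf_tensor_induction comul (R := K) a with a₁ a₂
  simp only [map_tmul, LinearEquiv.coe_coe, LinearMap.id_apply, hX.coact_eq, hX.coact_zpow]
  hopf_tensor_induction X.coact a₂ with n a₀
  hopf_tensor_induction comul (R := K) b with b₁ b₂
  simp only [map_tmul, LinearEquiv.coe_coe, LinearMap.id_apply, hX.coact_eq, hX.coact_zpow]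
  hopf_tensor_induction X.coact b₂ with l b₀
  simp only [map_tmul, LinearEquiv.coe_coe, LinearMap.comp_apply,
    tensorTensorTensorComm_tmul, assoc_symm_tmul, X.cross_eq, hX.comulH_eq, hX.comulH_zpow]
  hopf_tensor_induction comul (R := K) n with n₁ n₂
  simp only [map_tmul, LinearEquiv.coe_coe, LinearMap.id_apply, LinearMap.comp_apply,
    tensorTensorTensorComm_tmul, assoc_tmul, lift.tmul, hX.mulA_eq, hX.act_eq, hX.cocycle_eq,
    apply_eq_zpow AA.str, ← hX.mulA_zpow, ← hX.act_zpow, ← hX.cocycle_zpow, zpow_zpow_apply]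
  simp (disch := omega) only [zpow_eq_zero_apply]

lemma comul_act_iff (hX : IsUntwisting HB AA AC act coact σ m k X) :
    (∀ h b, comul (R := K) (X.act (h ⊗ₜ b)) =
      map X.crossOne X.act
        (tensorTensorTensorComm K H H (A ⊗[K] H) A (comul h ⊗ₜ X.comulCoact b))) ↔
      CondA8 HB AA AC act coact σ m k := by
  refine forall₂_congr fun h b ↦ ?_
  have e : AC.comul (act ((HB.str ^ m) h) b) = comul (X.act (h ⊗ₜ b)) := by
    rw [hX.comulA_eq, hX.act_eq, hX.comulA_zpow, map_zpow_map_zpow_cancel rfl rfl, zpow_zpow_apply,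
      zpow_eq_zero_apply (neg_add_cancel m)]
  rw [e]
  refine Eq.congr_right ?_
  simp only [hX.comulA_eq, hX.comulH_eq h, comulCoact, LinearMap.comp_apply]
  hopf_tensor_induction comul (R := K) b with b₁ b₂
  simp only [map_tmul, LinearEquiv.coe_coe, LinearMap.id_apply, hX.coact_eq, hX.coact_zpow]
  hopf_tensor_induction X.coact b₂ with l b₀
  hopf_tensor_induction comul (R := K) h with h₁ h₂
  simp only [map_tmul, LinearEquiv.coe_coe, LinearMap.id_apply, LinearMap.comp_apply,
    tensorTensorTensorComm_tmul, assoc_symm_tmul, hX.crossOne_tmul, hX.comulH_eq, hX.comulH_zpow]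
  hopf_tensor_induction comul (R := K) h₁ with n₁ n₂
  simp only [map_tmul, LinearEquiv.coe_coe, LinearMap.comp_apply,
    tensorTensorTensorComm_tmul, lift.tmul, hX.mulA_eq, hX.act_eq, hX.cocycle_eq,
    apply_eq_zpow AA.str, ← hX.mulA_zpow, ← hX.act_zpow, ← hX.cocycle_zpow, zpow_zpow_apply]
  simp (disch := omega) only [zpow_eq_zero_apply]

lemma coact_act_iff (hX : IsUntwisting HB AA AC act coact σ m k X) :
    (∀ h b, X.coactMul (map (X.coact ∘ₗ X.act ∘ₗ (TensorProduct.mk K H A).flip b) LinearMap.id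
        (comul h)) =
      map X.mulH X.act (tensorTensorTensorComm K H H H A (comul h ⊗ₜ X.coact b))) ↔
      CondA9 HB act coact m := by
  refine forall₂_congr fun h b ↦ ?_
  rw [hX.comulH_eq, hX.coact_eq]
  have e : X.coactMul (map (X.coact ∘ₗ X.act ∘ₗ (TensorProduct.mk K H A).flip b) LinearMap.id
      (comul h)) = coactMulAux HB (m - 1) LinearMap.id
      (map (coact ∘ₗ act.flip b ∘ₗ (HB.str ^ (m + 1)).toLinearMap) LinearMap.id
        (map (HB.str ^ (-1 : ℤ)).toLinearMap (HB.str ^ (-1 : ℤ)).toLinearMap (comul h))) := by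
    hopf_tensor_induction comul (R := K) h with h₁ h₂
    simp only [map_tmul, LinearEquiv.coe_coe, LinearMap.id_apply, LinearMap.comp_apply,
      LinearMap.flip_apply, mk_apply, hX.act_eq, zpow_zpow_apply, hX.coact_eq, hX.coact_zpow]
    rw [zpow_eq_zero_apply (by ring)]
    hopf_tensor_induction X.coact (X.act (h₁ ⊗ₜ b)) with x y
    simp only [coactMul, coactMulAux, map_tmul, LinearEquiv.coe_coe, LinearMap.comp_apply,
      assoc_tmul, assoc_symm_tmul, comm_tmul, LinearMap.id_apply, rightComm_tmul, lift.tmul,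
      hX.mulH_eq, ← hX.mulH_zpow, zpow_zpow_apply]
    simp (disch := omega) only [zpow_eq_zero_apply]
  rw [e]
  refine Eq.congr_right ?_
  hopf_tensor_induction comul (R := K) h with h₁ h₂
  hopf_tensor_induction X.coact b with l b₀
  simp only [map_tmul, LinearEquiv.coe_coe, LinearMap.id_apply, LinearMap.comp_apply,
    tensorTensorTensorComm_tmul, lift.tmul, hX.mulH_eq, hX.act_eq, ← hX.mulH_zpow, ← hX.act_zpow,
    zpow_zpow_apply]
  simp (disch := omega) only [zpow_eq_zero_apply]

lemma conditions_iff (hX : IsUntwisting HB AA AC act coact σ m k X) :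
    (X.CounitConditions ∧ X.UnitConditions ∧ X.MulConditions) ↔
      (CondA1 AA AC ∧ CondA2 HB AC act ∧ CondA3 HB AC σ ∧ CondA4 AA AC
        ∧ CondA5 HB AA coact ∧ CondA6 HB coact σ m k
        ∧ CondA7 HB AA AC act coact σ m k ∧ CondA8 HB AA AC act coact σ m k
        ∧ CondA9 HB act coact m) := by
  rw [hX.counitConditions_iff, hX.unitConditions_iff, CondA3, CondA5]
  constructor
  · rintro ⟨⟨h₁, h₂, h₃⟩, ⟨h₄, h₅⟩, h⟩
    exact ⟨h₁, h₂, ⟨hX.comul_cocycle_iff.1 h.comul_cocycle, h₃⟩, h₄,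
      ⟨hX.coact_mulA_iff.1 h.coact_mulA, h₅⟩, hX.coact_cocycle_iff.1 h.coact_cocycle,
      hX.comul_mulA_iff.1 h.comul_mulA, hX.comul_act_iff.1 h.comul_act,
      hX.coact_act_iff.1 h.coact_act⟩
  · rintro ⟨h₁, h₂, ⟨h₃, h₃'⟩, h₄, ⟨h₅, h₅'⟩, h₆, h₇, h₈, h₉⟩
    exact ⟨⟨h₁, h₂, h₃'⟩, ⟨h₄, h₅'⟩, hX.comul_cocycle_iff.2 h₃, hX.coact_mulA_iff.2 h₅,
      hX.coact_cocycle_iff.2 h₆, hX.comul_mulA_iff.2 h₇, hX.comul_act_iff.2 h₈,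
      hX.coact_act_iff.2 h₉⟩

lemma isTwisted (hX : IsUntwisting HB AA AC act coact σ m k X)
    (h : IsTwistedCocycle HB AA AC coact σ m k) : X.IsTwisted := by
  intro a g
  apply map_zpow_injective (e := TensorProduct.congr AA.str HB.str) (e' := AA.str) 0 (-2)
  have e := h a ((HB.str ^ (-1 : ℤ)) g)
  rw [hX.comulA_eq, hX.comulH_eq, hX.comulH_zpow] at e
  simp only [comulCoact, LinearMap.comp_apply]
  convert e.symm using 1
  · hopf_tensor_induction comul (R := K) a with a₁ a₂
    simp only [map_tmul, LinearEquiv.coe_coe, LinearMap.id_apply, hX.coact_eq, hX.coact_zpow]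
    hopf_tensor_induction X.coact a₂ with n a₀
    simp only [map_tmul, LinearEquiv.coe_coe, LinearMap.id_apply, LinearMap.comp_apply,
      assoc_symm_tmul, LinearMap.flip_apply, mk_apply, mulB_tmul, comul_tmul, hX.comulH_eq,
      hX.comulH_zpow]
    hopf_tensor_induction comul (R := K) n with n₁ n₂
    hopf_tensor_induction comul (R := K) g with g₁ g₂
    simp only [map_tmul, LinearEquiv.coe_coe, LinearMap.id_apply, LinearMap.comp_apply,
      assoc_tmul, assoc_symm_tmul, comm_tmul, tensorTensorTensorComm_tmul, zpow_zero,
      LinearEquiv.coe_one, id_eq, AlgebraTensorModule.tensorTensorTensorComm_tmul, hX.cross_oneA,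
      lift.tmul, hX.mulA_eq, hX.mulH_eq, hX.cocycle_eq, apply_eq_zpow HB.str, ← hX.mulA_zpow,
      ← hX.mulH_zpow, ← hX.cocycle_zpow, zpow_zpow_apply]
    simp (disch := omega) only [zpow_eq_zero_apply]
    rfl
  · hopf_tensor_induction comul (R := K) a with a₁ a₂
    simp only [map_tmul, LinearEquiv.coe_coe, LinearMap.id_apply, hX.coact_eq, hX.coact_zpow]
    hopf_tensor_induction X.coact a₂ with n a₀
    simp only [map_tmul, LinearEquiv.coe_coe, LinearMap.id_apply, LinearMap.comp_apply,
      assoc_symm_tmul, LinearMap.flip_apply, mk_apply, zpow_zero, LinearEquiv.coe_one, id_eq,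
      hX.mulH_eq, apply_eq_zpow AA.str, ← hX.mulH_zpow, zpow_zpow_apply]
    simp (disch := omega) only [zpow_eq_zero_apply]
    rfl

end IsUntwisting

end Transfer

section Biproduct

variable {K H A : Type*} [Field K] [AddCommGroup H] [Module K H] [AddCommGroup A] [Module K A]
  [Coalgebra K H] [Coalgebra K A] {HB : HomBialgebraStr K H} {AA : HomAlgebraStr K A}
  {AC : HomCoalgebraStr K A} {act : H →ₗ[K] A →ₗ[K] A} {coact : A →ₗ[K] H ⊗[K] A}
  {σ : H →ₗ[K] H →ₗ[K] A} {m k : ℤ} {X : CrossedBiproductData K H A}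

open Coalgebra CrossedBiproductData LinearEquiv

namespace IsUntwisting

lemma comulB_eq (hX : IsUntwisting HB AA AC act coact σ m k X) (a : A) (h : H) :
    X.comulB (a ⊗ₜ h) = map (TensorProduct.congr AA.str HB.str).toLinearMap
      (TensorProduct.congr AA.str HB.str).toLinearMap (scComulElem HB AC coact m a h) := by
  rw [comulB_tmul, scComulElem, hX.comulA_eq, hX.comulH_eq, comulCoact]
  simp only [LinearMap.comp_apply]
  hopf_tensor_induction comul (R := K) a with a₁ a₂
  hopf_tensor_induction comul (R := K) h with h₁ h₂
  simp only [map_tmul, LinearEquiv.coe_coe, LinearMap.id_apply, hX.coact_eq, hX.coact_zpow]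
  hopf_tensor_induction X.coact a₂ with n a₀
  simp only [map_tmul, LinearEquiv.coe_coe, LinearMap.id_apply, LinearMap.comp_apply,
    assoc_tmul, assoc_symm_tmul, tensorTensorTensorComm_tmul, lift.tmul, congr_tmul, hX.str_eq,
    hX.mulH_eq, apply_eq_zpow AA.str, apply_eq_zpow HB.str, ← hX.mulH_zpow, zpow_zpow_apply]
  simp (disch := omega) only [zpow_eq_zero_apply]

end IsUntwisting

namespace CrossedBiproductData

variable {M : HomAlgebraStr K (A ⊗[K] H)}

lemma mulB_str (hM : ∀ x y, M.mul x y = M.str (X.mulB (x ⊗ₜ y))) (x y : A ⊗[K] H) :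
    X.mulB (M.str x ⊗ₜ M.str y) = M.str (X.mulB (x ⊗ₜ y)) := by
  have h := M.str_mul x y
  rw [hM, hM] at h
  exact (M.str.injective h).symm

lemma mulB_assoc (hM : ∀ x y, M.mul x y = M.str (X.mulB (x ⊗ₜ y))) (x y z : A ⊗[K] H) :
    X.mulB (X.mulB (x ⊗ₜ y) ⊗ₜ z) = X.mulB (x ⊗ₜ X.mulB (y ⊗ₜ z)) := by
  have h := M.hom_assoc x y z
  simp only [hM, mulB_str hM] at h
  exact (M.str.injective (M.str.injective h)).symm

lemma tensorSquareMul_eq (hM : ∀ x y, M.mul x y = M.str (X.mulB (x ⊗ₜ y)))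
    (u v : (A ⊗[K] H) ⊗[K] (A ⊗[K] H)) :
    tensorSquareMul M.mul u v = X.mulBB (map M.str.toLinearMap M.str.toLinearMap u ⊗ₜ
      map M.str.toLinearMap M.str.toLinearMap v) := by
  rw [tensorSquareMul, curry_apply]
  hopf_tensor_induction u with x y
  hopf_tensor_induction v with z w
  simp [mulBB_tmul, mulB_str hM, hM]

end CrossedBiproductData

end Biproduct

/-- Theorem 3.3: the crossed product / smash coproduct structure on `A ⊗ H` is a monoidal
Hom-bialgebra if and only if conditions (A1)–(A9) hold. -/
theorem radford_biproduct_bialgebra_iff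
    {K H A : Type*} [Field K] [AddCommGroup H] [Module K H] [AddCommGroup A] [Module K A]
    (HB : HomBialgebraStr K H) (AA : HomAlgebraStr K A) (AC : HomCoalgebraStr K A)
    (hstr : AA.str = AC.str)
    (act : H →ₗ[K] A →ₗ[K] A) (hact : IsWeakModuleAlgebra HB AA act)
    (coact : A →ₗ[K] H ⊗[K] A) (hcc : IsComoduleCoalgebra HB AC coact)
    (σ : H →ₗ[K] H →ₗ[K] A) (m k : ℤ)
    (M : HomAlgebraStr K (A ⊗[K] H))
    (hMmul : ∀ (a : A) (h : H) (b : A) (g : H),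
      M.mul (a ⊗ₜ[K] h) (b ⊗ₜ[K] g) = cpMulElem HB AA act σ m k a h b g)
    (hMone : M.one = AA.one ⊗ₜ[K] HB.one)
    (hMstr : M.str = TensorProduct.congr AA.str HB.str)
    (hcoc : IsTwistedCocycle HB AA AC coact σ m k)
    (D : HomCoalgebraStr K (A ⊗[K] H))
    (hDcomul : ∀ (a : A) (h : H), D.comul (a ⊗ₜ[K] h) = scComulElem HB AC coact m a h)
    (hDcounit : ∀ (a : A) (h : H), D.counit (a ⊗ₜ[K] h) = AC.counit a * HB.counit h)
    (hDstr : D.str = TensorProduct.congr AC.str HB.str) :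
    (∃ B : HomBialgebraStr K (A ⊗[K] H),
        B.mul = M.mul ∧ B.one = M.one ∧ B.comul = D.comul ∧ B.counit = D.counit
          ∧ B.str = M.str)
    ↔ (CondA1 AA AC ∧ CondA2 HB AC act ∧ CondA3 HB AC σ ∧ CondA4 AA AC
        ∧ CondA5 HB AA coact ∧ CondA6 HB coact σ m k
        ∧ CondA7 HB AA AC act coact σ m k ∧ CondA8 HB AA AC act coact σ m k
        ∧ CondA9 HB act coact m) := by
  let _ := HB.toHomCoalgebraStr.untwist
  let _ := AC.untwist
  obtain ⟨X, hX, hM⟩ := exists_isUntwisting HB AA AC hstr (fun _ ↦ rfl) (fun _ ↦ rfl)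
    (fun _ ↦ rfl) (fun _ ↦ rfl) act hact coact hcc σ m k M hMmul hMone hMstr
  rw [← hX.conditions_iff]
  rw [← hMstr] at hM
  rw [← hstr, ← hMstr] at hDstr
  have hone : X.oneA ⊗ₜ[K] X.oneH = M.one := by rw [hMone, hX.oneA_eq, hX.oneH_eq]
  have hcomul (x : A ⊗[K] H) :
      X.comulB x = TensorProduct.map M.str.toLinearMap M.str.toLinearMap (D.comul x) := by
    induction x using TensorProduct.induction_on with
    | zero => simp
    | tmul a h => rw [hX.comulB_eq, hMstr, hDcomul]
    | add x y hx hy => simp only [map_add, hx, hy]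
  have hcounit (x : A ⊗[K] H) : CrossedBiproductData.counitB x = D.counit x := by
    induction x using TensorProduct.induction_on with
    | zero => simp
    | tmul a h =>
      rw [CrossedBiproductData.counitB_tmul, hDcounit, hX.counitA_eq, hX.counitH_eq]
    | add x y hx hy => simp only [map_add, hx, hy]
  have hcomul_mul (x y : A ⊗[K] H) : D.comul (M.mul x y) = X.comulB (X.mulB (x ⊗ₜ y)) := by
    rw [hM, ← hDstr, D.comul_str, hcomul, hDstr]
  have hmul_comul (x y : A ⊗[K] H) : tensorSquareMul M.mul (D.comul x) (D.comul y) =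
      X.mulBB (X.comulB x ⊗ₜ X.comulB y) := by
    rw [CrossedBiproductData.tensorSquareMul_eq hM, hcomul, hcomul]
  have hcounit_mul (x y : A ⊗[K] H) :
      D.counit (M.mul x y) = CrossedBiproductData.counitB (X.mulB (x ⊗ₜ y)) := by
    rw [hM, ← hDstr, D.counit_str, hcounit]
  have hcomul_one : X.comulB M.one = M.one ⊗ₜ M.one ↔ D.comul M.one = M.one ⊗ₜ M.one := by
    have h := D.comul_str M.one
    rw [hDstr, M.str_one] at h
    rw [hcomul, ← h]
  constructor
  · rintro ⟨B, hBmul, hBone, hBcomul, hBcounit, -⟩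
    have hc : X.CounitConditions := by
      refine CrossedBiproductData.counitConditions (fun x y ↦ ?_) ?_
      · rw [← hcounit_mul, hcounit, hcounit, ← hBcounit, ← hBmul, B.counit_mul]
      · rw [hone, hcounit, ← hBcounit, ← hBone, B.counit_one]
    have hu : X.UnitConditions := by
      refine CrossedBiproductData.unitConditions hc ?_
      rw [hone, hcomul_one, ← hBcomul, ← hBone, B.comul_one]
    refine ⟨hc, hu, CrossedBiproductData.mulConditions hc hu fun x y ↦ ?_⟩
    rw [← hcomul_mul, ← hmul_comul, ← hBcomul, ← hBmul, B.comul_mul]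
  · rintro ⟨hc, hu, hm⟩
    refine ⟨{ M with
      comul := D.comul
      counit := D.counit
      hom_coassoc := by rw [← hDstr]; exact D.hom_coassoc
      comul_str := by rw [← hDstr]; exact D.comul_str
      counit_comul_left := by rw [← hDstr]; exact D.counit_comul_left
      counit_comul_right := by rw [← hDstr]; exact D.counit_comul_right
      counit_str := by rw [← hDstr]; exact D.counit_str
      comul_mul := fun x y ↦ ?_
      comul_one := ?_
      counit_mul := fun x y ↦ ?_
      counit_one := ?_ }, rfl, rfl, rfl, rfl, rfl⟩
    · rw [hcomul_mul, hmul_comul]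
      exact CrossedBiproductData.comulB_mulB (CrossedBiproductData.mulB_assoc hM)
        (hX.isTwisted hcoc) hu hm x y
    · rw [← hcomul_one, ← hone]
      exact CrossedBiproductData.comulB_one hu
    · rw [hcounit_mul, CrossedBiproductData.counitB_mulB hc, hcounit, hcounit]
    · rw [← hcounit, ← hone, CrossedBiproductData.counitB_tmul, hc.counit_oneA, X.counit_oneH,
        mul_one]
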